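/- The operator δ̃ on the extended odd graph complex (decorated graphs of odd type with numbered crosses on external vertices) is well defined on the quotient D̃_o, satisfies δ̃ ∘ δ̃ = 0, raises the extended degree by 1 and leaves the extended order unchanged, i.e., δ̃: D̃_o^{k,m} → D̃_o^{k,m+1}. -/

import Mathlib

open scoped Classical

/-!
# The extended odd graph complex `(D̃_o, δ̃)` of decorated graphs with crosses

We encode a decorated graph of odd type with numbered crosses on external vertices as
follows.  Its vertices are the natural numbers `0, …, ve + vi - 1`: the labels
`0, …, ve - 1` are the external vertices, placed on the distinguished oriented circle in
the (cyclically increasing) order of their labels, and the labels `ve, …, ve + vi - 1`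
are the internal vertices.  Each edge is oriented, and each external small loop carries an
ordering of its two half-edges, recorded (relative to the orientation) in the Boolean
field `lp`.  Crosses are recorded as a list of external vertex labels, the position in the
list being the (0-indexed) label of the cross.  Labels here are 0-indexed, the paper's
labels being 1-indexed.
-/

/-- A decorated oriented edge: source and target vertex labels, together with the
half-edge-ordering bit for small loops. -/
structure OEdge where
  src : ℕ
  tgt : ℕ
  lp : Bool
deriving DecidableEq

/-- A decorated graph of the extended odd graph complex: `ve` external vertices (labels
`0,…,ve-1`, lying on the oriented circle in this cyclic order), `vi` internal vertices
(labels `ve,…,ve+vi-1`), a multiset of decorated oriented edges, and a list of crosses on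
external vertices: the cross labelled `a` (0-indexed) sits at the external vertex
`crosses.get a`. -/
structure OddXGraph where
  ve : ℕ
  vi : ℕ
  edges : Multiset OEdge
  crosses : List ℕ
deriving DecidableEq

namespace OddXGraph

/-- Total number of vertices. -/
def nv (g : OddXGraph) : ℕ := g.ve + g.vi

/-- The valence of a vertex: the number of edge-ends at it. -/
def valence (g : OddXGraph) (v : ℕ) : ℕ :=
  (g.edges.map fun e => (if e.src = v then 1 else 0) + (if e.tgt = v then 1 else 0)).sum

/-- Two vertices are adjacent if joined by an edge or if both lie on the circle. -/
def adj (g : OddXGraph) (a b : ℕ) : Prop :=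
  (∃ e ∈ g.edges, (e.src = a ∧ e.tgt = b) ∨ (e.src = b ∧ e.tgt = a)) ∨
    (a < g.ve ∧ b < g.ve)

/-- Connectivity of the graph (including the distinguished circle). -/
def Connected (g : OddXGraph) : Prop :=
  ∀ a b, a < g.nv → b < g.nv → Relation.ReflTransGen g.adj a b

/-- A valid graph of the extended odd complex: edges join actual vertices, non-loop edges
carry no half-edge-ordering bit, internal vertices are at least trivalent, every external
vertex carries at least one edge-end or a cross (a crossed vertex with no edges is
allowed), crosses sit at external vertices, and the graph is connected. -/
def IsValid (g : OddXGraph) : Prop :=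
  (∀ e ∈ g.edges, e.src < g.nv ∧ e.tgt < g.nv) ∧
  (∀ e ∈ g.edges, e.src ≠ e.tgt → e.lp = false) ∧
  (∀ v, g.ve ≤ v → v < g.nv → 3 ≤ g.valence v) ∧
  (∀ v, v < g.ve → 1 ≤ g.valence v ∨ v ∈ g.crosses) ∧
  (∀ c ∈ g.crosses, c < g.ve) ∧
  g.Connected

/-- Number of edges. -/
def numEdges (g : OddXGraph) : ℕ := Multiset.card g.edges

/-- Number of crosses. -/
def numCrosses (g : OddXGraph) : ℕ := g.crosses.length

/-- The *extended order* of a graph: `e - v_i + x`. -/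
def ordX (g : OddXGraph) : ℤ := (g.numEdges : ℤ) - (g.vi : ℤ) + (g.numCrosses : ℤ)

/-- The *extended degree* of a graph: `2e - 3v_i - v_e + x`. -/
def degX (g : OddXGraph) : ℤ :=
  2 * (g.numEdges : ℤ) - 3 * (g.vi : ℤ) - (g.ve : ℤ) + (g.numCrosses : ℤ)

/-- A *regular edge*: neither a small loop nor a chord. -/
def isRegular (g : OddXGraph) (e : OEdge) : Prop :=
  e.src ≠ e.tgt ∧ ¬(e.src < g.ve ∧ e.tgt < g.ve)

/-- Two vertices joined by more than one edge. -/
def hasDoubleEdge (g : OddXGraph) : Prop :=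
  ∃ e ∈ g.edges, ∃ f ∈ g.edges.erase e,
    (f.src = e.src ∧ f.tgt = e.tgt) ∨ (f.src = e.tgt ∧ f.tgt = e.src)

/-- An internal small loop. -/
def hasInternalLoop (g : OddXGraph) : Prop :=
  ∃ e ∈ g.edges, e.src = e.tgt ∧ g.ve ≤ e.src

end OddXGraph

/-- Vertex relabelling after merging the vertices `i` and `j`: the merged vertex receives
the label `min i j`, and all labels greater than `max i j` are lowered by one. -/
def mergeMap (i j x : ℕ) : ℕ :=
  if x = i ∨ x = j then min i j else if max i j < x then x - 1 else x

namespace OddXGraph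

/-- Contraction of a regular edge `e`: the edge is removed and its end-points are merged
(crosses follow the relabelling). -/
def contractEdge (g : OddXGraph) (e : OEdge) : OddXGraph where
  ve := g.ve
  vi := g.vi - 1
  edges := (g.edges.erase e).map fun f =>
    ⟨mergeMap e.src e.tgt f.src, mergeMap e.src e.tgt f.tgt, f.lp⟩
  crosses := g.crosses.map (mergeMap e.src e.tgt)

/-- Contraction of the arc running (along the circle orientation) from the external vertex
`i` to the consecutive external vertex `j`.  A short chord joining `i` and `j` becomes an
external small loop whose half-edges are ordered consistently with the orientation of the
circle; crosses follow the relabelling. -/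
def contractArc (g : OddXGraph) (i j : ℕ) : OddXGraph where
  ve := g.ve - 1
  vi := g.vi
  edges := g.edges.map fun f =>
    if f.src = i ∧ f.tgt = j then ⟨min i j, min i j, false⟩
    else if f.src = j ∧ f.tgt = i then ⟨min i j, min i j, true⟩
    else ⟨mergeMap i j f.src, mergeMap i j f.tgt, f.lp⟩
  crosses := g.crosses.map (mergeMap i j)

/-- Deletion of the cross labelled `a`: the cross is removed and an external small loop,
whose half-edges are ordered consistently with the orientation of the circle, is attached
at its vertex. -/
def deleteCross (g : OddXGraph) (a : Fin g.crosses.length) : OddXGraph where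
  ve := g.ve
  vi := g.vi
  edges := (⟨g.crosses.get a, g.crosses.get a, false⟩ : OEdge) ::ₘ g.edges
  crosses := g.crosses.eraseIdx a

/-- The arcs of the circle, as ordered pairs of consecutive external vertices (oriented
along the circle). -/
def arcs (g : OddXGraph) : List (ℕ × ℕ) :=
  if 2 ≤ g.ve then ((List.range (g.ve - 1)).map fun i => (i, i + 1)) ++ [(g.ve - 1, 0)]
  else []

end OddXGraph

/-- The contraction sign `σ(i,j)` (0-indexed version of the paper's
`σ(i,j) = (-1)^j` for `j > i` and `(-1)^{i+1}` for `j < i`, which is stated for 1-indexed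
labels). -/
def csign (i j : ℕ) : ℝ := if i < j then (-1) ^ (j + 1) else (-1) ^ i

/-- The value of the coboundary operator `δ̃` on a single graph of the extended odd
complex: the signed sum of the contractions of all regular edges and all arcs (exactly as
for `δ_o`), plus, for every cross, the deletion of that cross with sign
`(-1)^{deg̃ Γ + a}` (`a` being the 1-indexed cross label; here the 0-indexed exponent is
`deg̃ Γ + a + 1`).  (On graphs that are `0` by the relations, the operator is extended by
`0`.) -/
noncomputable def deltaXGen (g : OddXGraph) : OddXGraph →₀ ℝ :=
  if g.IsValid ∧ ¬g.hasDoubleEdge ∧ ¬g.hasInternalLoop then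
    ((g.edges.filter fun e => g.isRegular e).map fun e =>
        csign e.src e.tgt • Finsupp.single (g.contractEdge e) (1 : ℝ)).sum
      + (g.arcs.map fun p =>
          csign p.1 p.2 • Finsupp.single (g.contractArc p.1 p.2) (1 : ℝ)).sum
      + ((List.finRange g.crosses.length).map fun a : Fin g.crosses.length =>
          ((-1 : ℝ) ^ (g.degX + (a.val : ℤ) + 1)) •
            Finsupp.single (g.deleteCross a) (1 : ℝ)).sum
  else 0

/-- The coboundary operator `δ̃` on the free vector space generated by graphs of the
extended odd complex. -/
noncomputable def deltaXFree : (OddXGraph →₀ ℝ) →ₗ[ℝ] (OddXGraph →₀ ℝ) :=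
  Finsupp.lsum ℝ fun g => LinearMap.toSpanSingleton ℝ (OddXGraph →₀ ℝ) (deltaXGen g)

/-- Relabelling of vertices by a permutation `π` of the internal labels and a cyclic
rotation by `r` of the external labels. -/
def permVertexX (ve vi : ℕ) (π : Equiv.Perm (Fin vi)) (r : ℕ) (v : ℕ) : ℕ :=
  if v < ve then (v + r) % ve
  else if h : v - ve < vi then ve + (π ⟨v - ve, h⟩ : Fin vi) else v

/-- The action of a vertex relabelling on a decorated edge. -/
def permOEdgeX (ve vi : ℕ) (π : Equiv.Perm (Fin vi)) (r : ℕ) (e : OEdge) : OEdge :=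
  ⟨permVertexX ve vi π r e.src, permVertexX ve vi π r e.tgt, e.lp⟩

/-- Reversal of the orientation of an edge (for small loops: reversal of the half-edge
ordering relative to the orientation). -/
def flipOEdgeX (e : OEdge) : OEdge :=
  if e.src = e.tgt then ⟨e.src, e.tgt, !e.lp⟩ else ⟨e.tgt, e.src, e.lp⟩

/-- `OddXRel g g' ε` holds when `g'` is obtained from `g` by a permutation of the internal
labels, a cyclic permutation of the external labels, reversals of edge orientations and of
half-edge orderings of external small loops, and a permutation `ρ` of the cross labels;
`ε = (-1)^{π₁+π₂+l+s+σ}` is the corresponding sign (`σ` being the order of `ρ`). -/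
def OddXRel (g g' : OddXGraph) (ε : ℝ) : Prop :=
  g'.ve = g.ve ∧ g'.vi = g.vi ∧
  ∃ (π : Equiv.Perm (Fin g.vi)) (r : ℕ) (F : Multiset (OEdge × Bool))
    (hc : g'.crosses.length = g.crosses.length)
    (ρ : Equiv.Perm (Fin g.crosses.length)),
    F.map Prod.fst = g.edges.map (permOEdgeX g.ve g.vi π r) ∧
    g'.edges = F.map (fun p => if p.2 then flipOEdgeX p.1 else p.1) ∧
    (∀ a : Fin g.crosses.length,
      g'.crosses.get (Fin.cast hc.symm (ρ a)) =
        permVertexX g.ve g.vi π r (g.crosses.get a)) ∧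
    ε = ((Equiv.Perm.sign π : ℤ) : ℝ)
        * ((Equiv.Perm.sign (finRotate g.ve ^ r) : ℤ) : ℝ)
        * (-1) ^ Multiset.card (F.filter fun p => p.2 = true)
        * ((Equiv.Perm.sign ρ : ℤ) : ℝ)

/-- The defining relations of `D̃_o`: non-graphs are `0`, graphs with a double edge are
`0`, graphs with an internal small loop are `0`, and graphs differing only in the
decoration are identified up to sign. -/
def oddXRelSet : Set (OddXGraph →₀ ℝ) :=
  {x | ∃ g : OddXGraph, ¬g.IsValid ∧ x = Finsupp.single g 1} ∪
  {x | ∃ g : OddXGraph, g.hasDoubleEdge ∧ x = Finsupp.single g 1} ∪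
  {x | ∃ g : OddXGraph, g.hasInternalLoop ∧ x = Finsupp.single g 1} ∪
  {x | ∃ g g' ε, OddXRel g g' ε ∧ x = Finsupp.single g 1 - ε • Finsupp.single g' 1}

/-- The submodule of relations. -/
noncomputable def oddXRelations : Submodule ℝ (OddXGraph →₀ ℝ) :=
  Submodule.span ℝ oddXRelSet

/-- The extended odd graph complex `D̃_o`. -/
abbrev DoX := (OddXGraph →₀ ℝ) ⧸ oddXRelations

/-- The subspace `D̃_o^{k,m}` of `D̃_o` spanned by the graphs of extended order `k` and
extended degree `m`. -/
noncomputable def oddXPiece (k m : ℤ) : Submodule ℝ DoX :=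
  Submodule.span ℝ {x | ∃ g : OddXGraph,
    g.IsValid ∧ g.ordX = k ∧ g.degX = m ∧
    x = Submodule.Quotient.mk (p := oddXRelations) (Finsupp.single g 1)}

/-!
The coboundary acts on a graph at its sites: regular edges, arcs and crosses. The sign relations
are generated by four moves: the exchange of two adjacent internal labels, the rotation of the
external labels by one step, the reversal of one edge, and the exchange of two adjacent crosses.
Each move induces a bijection of sites under which every signed contraction changes by the sign of
the move, so the coboundary descends to the quotient.

For `δ̃ ∘ δ̃ = 0`, the successive actions at two sites anticommute, with one exception: contracting
an arc makes two edges parallel when they form a triangle with the arc. Contracting the arc first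
then gives `0`, whereas contracting one of the two edges and then the arc turns the other edge into
a small loop. The two graphs so obtained agree up to the orientation of this loop, and their signs
are such that the two terms cancel.
-/

/-! ### Merging two labels -/

lemma mergeMap_comm (i j x : ℕ) : mergeMap i j x = mergeMap j i x := by
  unfold mergeMap
  split_ifs <;> omega

lemma mergeMap_congr {i j k l : ℕ} (h : s(i, j) = s(k, l)) : mergeMap i j = mergeMap k l := by
  rcases Sym2.eq_iff.1 h with ⟨rfl, rfl⟩ | ⟨rfl, rfl⟩
  · rfl
  · exact funext (mergeMap_comm _ _)

lemma mergeMap_of_lt {i j : ℕ} (h : i < j) (x : ℕ) :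
    mergeMap i j x = if x = j then i else if j < x then x - 1 else x := by
  unfold mergeMap
  split_ifs <;> omega

lemma mergeMap_eq_self_of_lt {i j x : ℕ} (hx : x < max i j) : mergeMap i j x = x := by
  unfold mergeMap
  split_ifs <;> omega

lemma mergeMap_left (i j : ℕ) : mergeMap i j i = min i j := if_pos (Or.inl rfl)

lemma mergeMap_right (i j : ℕ) : mergeMap i j j = min i j := if_pos (Or.inr rfl)

lemma mergeMap_left_eq_right (i j : ℕ) : mergeMap i j i = mergeMap i j j := by
  rw [mergeMap_left, mergeMap_right]

lemma mergeMap_eq_iff {i j : ℕ} (hij : i ≠ j) (x y : ℕ) :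
    mergeMap i j x = mergeMap i j y ↔ x = y ∨ (x = i ∨ x = j) ∧ (y = i ∨ y = j) := by
  unfold mergeMap
  split_ifs <;> omega

lemma mergeMap_le (i j x : ℕ) : mergeMap i j x ≤ x := by
  unfold mergeMap
  split_ifs <;> omega

lemma mergeMap_lt_pred {i j x n : ℕ} (hij : i ≠ j) (hi : i < n) (hj : j < n) (hx : x < n) :
    mergeMap i j x < n - 1 := by
  unfold mergeMap
  split_ifs <;> omega

lemma mergeMap_lt_iff_of_lt {i j n : ℕ} (hij : i ≠ j) (hi : i < n) (hj : j < n) (x : ℕ) :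
    mergeMap i j x < n - 1 ↔ x < n := by
  unfold mergeMap
  split_ifs <;> omega

lemma mergeMap_ne_of_mergeMap_ne {i j k l : ℕ} (hij : i ≠ j) (hkl : k ≠ l)
    (h : mergeMap i j k ≠ mergeMap i j l) : mergeMap k l i ≠ mergeMap k l j := by
  rw [Ne, mergeMap_eq_iff hij] at h
  rw [Ne, mergeMap_eq_iff hkl]
  omega

lemma mergeMap_mergeMap_of_lt {i j k l : ℕ} (hij : i < j) (hkl : k < l) (hjl : j < l) (v : ℕ) :
    mergeMap (mergeMap i j k) (mergeMap i j l) (mergeMap i j v) =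
      mergeMap (mergeMap k l i) (mergeMap k l j) (mergeMap k l v) := by
  have hl : mergeMap i j l = l - 1 := by rw [mergeMap_of_lt hij]; split_ifs <;> omega
  have hk : mergeMap i j k < l - 1 := by rw [mergeMap_of_lt hij]; split_ifs <;> omega
  have hi : mergeMap k l i = i := by rw [mergeMap_of_lt hkl]; split_ifs <;> omega
  have hj : mergeMap k l j = j := by rw [mergeMap_of_lt hkl]; split_ifs <;> omega
  rw [hl, hi, hj, mergeMap_of_lt hk]
  simp only [mergeMap_of_lt hij, mergeMap_of_lt hkl]
  split_ifs <;> omega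

lemma mergeMap_mergeMap_of_eq {i k l : ℕ} (hil : i < l) (hkl : k < l) (v : ℕ) :
    mergeMap (mergeMap i l k) (mergeMap i l l) (mergeMap i l v) =
      mergeMap (mergeMap k l i) (mergeMap k l l) (mergeMap k l v) := by
  have hk : mergeMap i l k = k := mergeMap_eq_self_of_lt (by omega)
  have hi : mergeMap k l i = i := mergeMap_eq_self_of_lt (by omega)
  rw [hk, hi, mergeMap_right, mergeMap_right, min_eq_left hil.le, min_eq_left hkl.le,
    mergeMap_comm k i, mergeMap_of_lt hil, mergeMap_of_lt hkl]
  unfold mergeMap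
  split_ifs <;> omega

lemma mergeMap_mergeMap {i j k l : ℕ} (hij : i ≠ j) (hkl : k ≠ l)
    (h : mergeMap i j k ≠ mergeMap i j l) (v : ℕ) :
    mergeMap (mergeMap i j k) (mergeMap i j l) (mergeMap i j v) =
      mergeMap (mergeMap k l i) (mergeMap k l j) (mergeMap k l v) := by
  wlog hij' : i < j generalizing i j
  · rw [mergeMap_comm i j, mergeMap_comm i j, mergeMap_comm i j, mergeMap_comm (mergeMap k l i)]
    refine this hij.symm ?_ (by omega)
    rwa [mergeMap_comm j i, mergeMap_comm j i]
  wlog hkl' : k < l generalizing k l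
  · rw [mergeMap_comm k l, mergeMap_comm k l, mergeMap_comm k l, mergeMap_comm (mergeMap i j k)]
    exact this hkl.symm h.symm (by omega)
  rcases lt_trichotomy j l with hjl | rfl | hlj
  · exact mergeMap_mergeMap_of_lt hij' hkl' hjl v
  · exact mergeMap_mergeMap_of_eq hij' hkl' v
  · exact (mergeMap_mergeMap_of_lt hkl' hij' hlj v).symm

/-! ### The contraction sign -/

lemma neg_one_pow_eq_neg_of_odd_add {R : Type*} [Ring R] {a b : ℕ} (h : Odd (a + b)) :
    (-1 : R) ^ a = -(-1) ^ b :=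
  calc (-1 : R) ^ a = (-1) ^ (a + b) * (-1) ^ b := by
        rw [pow_add, mul_assoc, ← pow_add, Even.neg_one_pow ⟨b, rfl⟩, mul_one]
    _ = -(-1) ^ b := by rw [h.neg_one_pow, neg_one_mul]

/-- The exponent of the contraction sign `csign i j`. -/
def csignExp (i j : ℕ) : ℕ := if i < j then j + 1 else i

lemma csign_eq_neg_one_pow (i j : ℕ) : csign i j = (-1) ^ csignExp i j := by
  unfold csign csignExp
  split_ifs <;> rfl

lemma csign_comm {i j : ℕ} (h : i ≠ j) : csign j i = -csign i j := by
  rw [csign_eq_neg_one_pow, csign_eq_neg_one_pow]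
  apply neg_one_pow_eq_neg_of_odd_add
  unfold csignExp
  split_ifs <;> grind

lemma csign_mul_csign_of_lt {i j k l : ℕ} (hij : i < j) (hkl : k < l) (hjl : j < l) :
    csign i j * csign (mergeMap i j k) (mergeMap i j l) =
      -(csign k l * csign (mergeMap k l i) (mergeMap k l j)) := by
  have hl : mergeMap i j l = l - 1 := by rw [mergeMap_of_lt hij]; split_ifs <;> omega
  have hk : mergeMap i j k < l - 1 := by rw [mergeMap_of_lt hij]; split_ifs <;> omega
  have hi : mergeMap k l i = i := by rw [mergeMap_of_lt hkl]; split_ifs <;> omega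
  have hj : mergeMap k l j = j := by rw [mergeMap_of_lt hkl]; split_ifs <;> omega
  rw [hl, hi, hj]
  simp only [csign, if_pos hij, if_pos hkl, if_pos hk, ← pow_add]
  exact neg_one_pow_eq_neg_of_odd_add (by grind)

lemma csign_mul_csign_of_eq {i k l : ℕ} (hil : i < l) (hkl : k < l) (hik : i ≠ k) :
    csign i l * csign (mergeMap i l k) (mergeMap i l l) =
      -(csign k l * csign (mergeMap k l i) (mergeMap k l l)) := by
  have hk : mergeMap i l k = k := mergeMap_eq_self_of_lt (by omega)
  have hi : mergeMap k l i = i := mergeMap_eq_self_of_lt (by omega)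
  rw [hk, hi, mergeMap_right, mergeMap_right, min_eq_left hil.le, min_eq_left hkl.le,
    csign_comm hik]
  simp only [csign, if_pos hil, if_pos hkl, mul_neg]

lemma csign_mul_csign {i j k l : ℕ} (hij : i ≠ j) (hkl : k ≠ l)
    (h : mergeMap i j k ≠ mergeMap i j l) :
    csign i j * csign (mergeMap i j k) (mergeMap i j l) =
      -(csign k l * csign (mergeMap k l i) (mergeMap k l j)) := by
  have h' : mergeMap k l i ≠ mergeMap k l j := mergeMap_ne_of_mergeMap_ne hij hkl h
  wlog hij' : i < j generalizing i j
  · rw [csign_comm hij.symm, mergeMap_comm i j, mergeMap_comm i j, csign_comm h'.symm, neg_mul,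
      mul_neg, this hij.symm (by rwa [mergeMap_comm j i, mergeMap_comm j i]) h'.symm (by omega)]
  wlog hkl' : k < l generalizing k l
  · rw [csign_comm hkl.symm, mergeMap_comm k l, mergeMap_comm k l, csign_comm h.symm, neg_mul,
      mul_neg, this hkl.symm h.symm (by rwa [mergeMap_comm l k, mergeMap_comm l k]) (by omega)]
  rcases lt_trichotomy j l with hjl | rfl | hlj
  · exact csign_mul_csign_of_lt hij' hkl' hjl
  · refine csign_mul_csign_of_eq hij' hkl' ?_
    rintro rfl
    exact h (mergeMap_left_eq_right i j)
  · rw [csign_mul_csign_of_lt hkl' hij' hlj, neg_neg]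

/-! ### Elementary relabellings -/

lemma mergeMap_swap_of_max_eq {i j k : ℕ} (hij : i ≠ j) (h : max i j = k ∨ max i j = k + 1)
    (v : ℕ) :
    mergeMap (Equiv.swap k (k + 1) i) (Equiv.swap k (k + 1) j) (Equiv.swap k (k + 1) v) =
      mergeMap i j v := by
  simp only [Equiv.swap_apply_def, mergeMap]
  grind

lemma csign_swap_of_max_eq {i j k : ℕ} (h : max i j = k ∨ max i j = k + 1) :
    csign (Equiv.swap k (k + 1) i) (Equiv.swap k (k + 1) j) = -csign i j := by
  simp only [csign_eq_neg_one_pow]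
  apply neg_one_pow_eq_neg_of_odd_add
  simp only [Equiv.swap_apply_def, csignExp]
  grind

lemma mergeMap_swap_of_max_ne {i j k : ℕ} (hij : i ≠ j) (h : max i j ≠ k)
    (h' : max i j ≠ k + 1) (v : ℕ) :
    mergeMap (Equiv.swap k (k + 1) i) (Equiv.swap k (k + 1) j) (Equiv.swap k (k + 1) v) =
      Equiv.swap (if max i j < k then k - 1 else k) ((if max i j < k then k - 1 else k) + 1)
        (mergeMap i j v) := by
  wlog hij' : i < j generalizing i j
  · rw [mergeMap_comm (Equiv.swap k (k + 1) i), mergeMap_comm i, max_comm]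
    exact this hij.symm (by omega) (by omega) (by omega)
  have hj : Equiv.swap k (k + 1) j = j := Equiv.swap_apply_of_ne_of_ne (by omega) (by omega)
  have hi : Equiv.swap k (k + 1) i < j := by rw [Equiv.swap_apply_def]; grind
  rw [hj, mergeMap_of_lt hij', mergeMap_of_lt hi, max_eq_right hij'.le]
  simp only [Equiv.swap_apply_def]
  split_ifs <;> omega

lemma csign_swap_of_max_ne {i j k : ℕ} (h : max i j ≠ k) (h' : max i j ≠ k + 1) :
    csign (Equiv.swap k (k + 1) i) (Equiv.swap k (k + 1) j) = csign i j := by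
  simp only [Equiv.swap_apply_def, csign]
  grind

/-- The cyclic shift `v ↦ v + 1` of the labels `0, …, n - 1`, fixing all other labels. -/
def cyclicShift (n : ℕ) : Equiv.Perm ℕ where
  toFun v := if v + 1 < n then v + 1 else if v + 1 = n then 0 else v
  invFun v := if n ≤ v then v else if v = 0 then n - 1 else v - 1
  left_inv v := by grind
  right_inv v := by grind

lemma cyclicShift_apply (n v : ℕ) :
    cyclicShift n v = if v + 1 < n then v + 1 else if v + 1 = n then 0 else v := rfl

lemma mergeMap_cyclicShift_of_not_chord {n i j : ℕ} (hij : i ≠ j) (h : ¬(i < n ∧ j < n))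
    (v : ℕ) :
    mergeMap (cyclicShift n i) (cyclicShift n j) (cyclicShift n v) =
      cyclicShift n (mergeMap i j v) := by
  wlog hij' : i < j generalizing i j
  · rw [mergeMap_comm (cyclicShift n i), mergeMap_comm i]
    exact this hij.symm (by omega) (by omega)
  have hj : cyclicShift n j = j := by rw [cyclicShift_apply]; grind
  have hi : cyclicShift n i < j := by rw [cyclicShift_apply]; grind
  rw [hj, mergeMap_of_lt hij', mergeMap_of_lt hi]
  simp only [cyclicShift_apply]
  split_ifs <;> omega

lemma csign_cyclicShift_of_not_chord {n i j : ℕ} (h : ¬(i < n ∧ j < n)) :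
    csign (cyclicShift n i) (cyclicShift n j) = csign i j := by
  simp only [cyclicShift_apply, csign]
  grind

lemma mergeMap_cyclicShift_succ {n i : ℕ} (h : i + 1 < n) (v : ℕ) :
    mergeMap (cyclicShift n i) (cyclicShift n (i + 1)) (cyclicShift n v) =
      cyclicShift (n - 1) (mergeMap i (i + 1) v) := by
  simp only [cyclicShift_apply, mergeMap]
  grind

lemma csign_cyclicShift_succ {n i : ℕ} (h : i + 1 < n) :
    csign (cyclicShift n i) (cyclicShift n (i + 1)) = -csign i (i + 1) := by
  simp only [csign_eq_neg_one_pow]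
  apply neg_one_pow_eq_neg_of_odd_add
  simp only [cyclicShift_apply, csignExp]
  grind

lemma mergeMap_cyclicShift_last {n : ℕ} (h : 2 ≤ n) (v : ℕ) :
    mergeMap (cyclicShift n (n - 1)) (cyclicShift n 0) (cyclicShift n v) =
      mergeMap (n - 1) 0 v := by
  simp only [cyclicShift_apply, mergeMap]
  grind

lemma csign_cyclicShift_last {n : ℕ} (h : 2 ≤ n) :
    csign (cyclicShift n (n - 1)) (cyclicShift n 0) = (-1) ^ (n - 1) * csign (n - 1) 0 := by
  simp only [cyclicShift_apply, csign]
  have hn : n - 1 + 1 = n := by omega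
  simp [hn, show 1 < n by omega, ← pow_add]

/-! ### Edges -/

lemma multiset_nodup_map_iff_erase {α β : Type*} [DecidableEq α] {p : α → β} {E : Multiset α} :
    (E.map p).Nodup ↔ ∀ a ∈ E, ∀ b ∈ E.erase a, p a ≠ p b := by
  refine ⟨fun h a ha b hb hab => ?_, fun h => ?_⟩
  · rw [← Multiset.cons_erase ha, ← Multiset.cons_erase hb, Multiset.map_cons, Multiset.map_cons,
      hab] at h
    exact (Multiset.nodup_cons.1 h).1 (Multiset.mem_cons_self _ _)
  · have hE : E.Nodup := by
      refine Multiset.nodup_iff_ne_cons_cons.2 fun a F hF => ?_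
      subst hF
      exact h a (Multiset.mem_cons_self _ _) a (by simp) rfl
    exact (Multiset.nodup_map_iff_inj_on hE).2 fun a ha b hb hab => by_contra fun hne =>
      h a ha b ((Multiset.mem_erase_of_ne (Ne.symm hne)).2 hb) hab

namespace OEdge

/-- The decorated edge obtained by applying a map to the two end-points. -/
def map (f : ℕ → ℕ) (e : OEdge) : OEdge := ⟨f e.src, f e.tgt, e.lp⟩

/-- The contraction of the arc from `i` to `j`, acting on a decorated edge; on edges which are
not chords from `i` to `j` or back it agrees with `OEdge.map (mergeMap i j)`. -/
def contractArc (i j : ℕ) (e : OEdge) : OEdge :=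
  if e.src = i ∧ e.tgt = j then ⟨min i j, min i j, false⟩
  else if e.src = j ∧ e.tgt = i then ⟨min i j, min i j, true⟩
  else ⟨mergeMap i j e.src, mergeMap i j e.tgt, e.lp⟩

/-- The unordered pair of end-points of an edge. -/
def ends (e : OEdge) : Sym2 ℕ := s(e.src, e.tgt)

/-- The number of ends of an edge at the vertex `v`. -/
def incidence (v : ℕ) (e : OEdge) : ℕ :=
  (if e.src = v then 1 else 0) + (if e.tgt = v then 1 else 0)

lemma map_map (f f' : ℕ → ℕ) (e : OEdge) : (e.map f).map f' = e.map (f' ∘ f) := rfl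

lemma map_id (e : OEdge) : e.map id = e := rfl

lemma ends_eq_iff {e f : OEdge} :
    e.ends = f.ends ↔ e.src = f.src ∧ e.tgt = f.tgt ∨ e.src = f.tgt ∧ e.tgt = f.src :=
  Sym2.eq_iff

lemma ends_map (f : ℕ → ℕ) (e : OEdge) : (e.map f).ends = e.ends.map f := rfl

lemma contractArc_src (i j : ℕ) (e : OEdge) : (e.contractArc i j).src = mergeMap i j e.src := by
  unfold contractArc
  split_ifs with h h'
  · rw [h.1, mergeMap_left]
  · rw [h'.1, mergeMap_right]
  · rfl

lemma contractArc_tgt (i j : ℕ) (e : OEdge) : (e.contractArc i j).tgt = mergeMap i j e.tgt := by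
  unfold contractArc
  split_ifs with h h'
  · rw [h.2, mergeMap_right]
  · rw [h'.2, mergeMap_left]
  · rfl

lemma ends_contractArc (i j : ℕ) (e : OEdge) :
    (e.contractArc i j).ends = e.ends.map (mergeMap i j) := by
  rw [ends, contractArc_src, contractArc_tgt]
  rfl

lemma contractArc_lp_of_ne {i j : ℕ} {e : OEdge}
    (h : mergeMap i j e.src ≠ mergeMap i j e.tgt) : (e.contractArc i j).lp = e.lp := by
  unfold contractArc
  split_ifs with h' h'
  · rw [h'.1, h'.2] at h
    exact absurd (mergeMap_left_eq_right i j) h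
  · rw [h'.1, h'.2] at h
    exact absurd (mergeMap_left_eq_right i j).symm h
  · rfl

end OEdge

namespace OddXGraph

lemma hasDoubleEdge_iff_not_nodup {g : OddXGraph} :
    g.hasDoubleEdge ↔ ¬(g.edges.map OEdge.ends).Nodup := by
  simp only [multiset_nodup_map_iff_erase, OEdge.ends_eq_iff, not_forall, not_not, exists_prop]
  refine exists_congr fun e => and_congr_right' (exists_congr fun f => and_congr_right' ?_)
  omega

/-- The graphs which the relations do not set to zero. -/
structure IsAdmissible (g : OddXGraph) : Prop where
  isValid : g.IsValid
  nodup_ends : (g.edges.map OEdge.ends).Nodup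
  not_hasInternalLoop : ¬g.hasInternalLoop

lemma isAdmissible_iff {g : OddXGraph} :
    g.IsAdmissible ↔ g.IsValid ∧ ¬g.hasDoubleEdge ∧ ¬g.hasInternalLoop := by
  rw [hasDoubleEdge_iff_not_nodup, not_not]
  exact ⟨fun h => ⟨h.1, h.2, h.3⟩, fun h => ⟨h.1, h.2.1, h.2.2⟩⟩

section IsAdmissible

variable {g : OddXGraph} (hg : g.IsAdmissible) {e f : OEdge}
include hg

lemma IsAdmissible.src_lt (he : e ∈ g.edges) : e.src < g.nv := (hg.isValid.1 e he).1

lemma IsAdmissible.tgt_lt (he : e ∈ g.edges) : e.tgt < g.nv := (hg.isValid.1 e he).2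

lemma IsAdmissible.lp_eq_false (he : e ∈ g.edges) (hne : e.src ≠ e.tgt) : e.lp = false :=
  hg.isValid.2.1 e he hne

lemma IsAdmissible.three_le_valence {v : ℕ} (hv : g.ve ≤ v) (hv' : v < g.nv) :
    3 ≤ g.valence v :=
  hg.isValid.2.2.1 v hv hv'

lemma IsAdmissible.one_le_valence_or_mem_crosses {v : ℕ} (hv : v < g.ve) :
    1 ≤ g.valence v ∨ v ∈ g.crosses :=
  hg.isValid.2.2.2.1 v hv

lemma IsAdmissible.cross_lt {c : ℕ} (hc : c ∈ g.crosses) : c < g.ve := hg.isValid.2.2.2.2.1 c hc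

lemma IsAdmissible.connected : g.Connected := hg.isValid.2.2.2.2.2

lemma IsAdmissible.nodup : g.edges.Nodup := hg.nodup_ends.of_map _

lemma IsAdmissible.eq_of_ends_eq (he : e ∈ g.edges) (hf : f ∈ g.edges) (h : e.ends = f.ends) :
    e = f :=
  Multiset.inj_on_of_nodup_map hg.nodup_ends e he f hf h

lemma IsAdmissible.src_lt_ve_of_loop (he : e ∈ g.edges) (h : e.src = e.tgt) : e.src < g.ve :=
  not_le.1 fun hle => hg.not_hasInternalLoop ⟨e, he, h, hle⟩

end IsAdmissible

/-! ### The sites of the coboundary -/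

/-- A place where the coboundary may act: an edge, the arc of the circle from `i` to `j`, or the
cross labelled `a`. -/
inductive Site
  | edge (e : OEdge)
  | arc (i j : ℕ)
  | cross (a : ℕ)

/-- Two external labels which are consecutive on a circle with `n` external vertices. -/
def IsArc (n i j : ℕ) : Prop := (i + 1 < n ∧ j = i + 1) ∨ (2 ≤ n ∧ i = n - 1 ∧ j = 0)

lemma IsArc.left_lt {n i j : ℕ} (h : IsArc n i j) : i < n := by
  unfold IsArc at h
  omega

lemma IsArc.right_lt {n i j : ℕ} (h : IsArc n i j) : j < n := by
  unfold IsArc at h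
  omega

lemma IsArc.ne {n i j : ℕ} (h : IsArc n i j) : i ≠ j := by
  unfold IsArc at h
  omega

lemma mem_arcs {g : OddXGraph} {p : ℕ × ℕ} : p ∈ g.arcs ↔ IsArc g.ve p.1 p.2 := by
  obtain ⟨i, j⟩ := p
  unfold arcs IsArc
  split_ifs with h
  · simp only [List.mem_append, List.mem_map, List.mem_range, Prod.mk.injEq, List.mem_singleton]
    constructor
    · rintro (⟨k, hk, rfl, rfl⟩ | hlast)
      · exact Or.inl ⟨by omega, rfl⟩
      · exact Or.inr ⟨h, hlast⟩
    · rintro (⟨hi, rfl⟩ | ⟨-, hlast⟩)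
      · exact Or.inl ⟨i, by omega, rfl, rfl⟩
      · exact Or.inr hlast
  · simp only [List.not_mem_nil, false_iff]
    omega

lemma nodup_arcs (g : OddXGraph) : g.arcs.Nodup := by
  unfold arcs
  split_ifs with h
  · refine List.Nodup.append ?_ (List.nodup_singleton _) ?_
    · exact List.nodup_range.map fun a b h => congrArg Prod.fst h
    · simp [List.disjoint_singleton]
  · exact List.nodup_nil

/-- The sites of `g`: its regular edges, its arcs and its crosses. -/
noncomputable def sites (g : OddXGraph) : Finset Site :=
  (g.edges.filter fun e => g.isRegular e).toFinset.image Site.edge ∪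
    (g.arcs.toFinset.image fun p => Site.arc p.1 p.2) ∪
      (Finset.range g.crosses.length).image Site.cross

lemma edge_mem_sites {g : OddXGraph} {e : OEdge} :
    Site.edge e ∈ g.sites ↔ e ∈ g.edges ∧ g.isRegular e := by
  simp [sites]

lemma arc_mem_sites {g : OddXGraph} {i j : ℕ} : Site.arc i j ∈ g.sites ↔ IsArc g.ve i j := by
  simp [sites, mem_arcs]

lemma cross_mem_sites {g : OddXGraph} {a : ℕ} :
    Site.cross a ∈ g.sites ↔ a < g.crosses.length := by
  simp [sites]

lemma sum_sites {M : Type*} [AddCommMonoid M] (g : OddXGraph) (φ : Site → M) :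
    ∑ s ∈ g.sites, φ s =
      ∑ e ∈ (g.edges.filter fun e => g.isRegular e).toFinset, φ (Site.edge e) +
        ∑ p ∈ g.arcs.toFinset, φ (Site.arc p.1 p.2) +
          ∑ a ∈ Finset.range g.crosses.length, φ (Site.cross a) := by
  rw [sites, Finset.sum_union, Finset.sum_union, Finset.sum_image, Finset.sum_image,
    Finset.sum_image]
  · exact fun a _ b _ h => by simpa using h
  · exact fun p _ q _ h => by simpa [Prod.ext_iff] using h
  · exact fun e _ f _ h => by simpa using h
  · simp only [Finset.disjoint_left, Finset.mem_image]
    rintro _ ⟨e, -, rfl⟩ ⟨p, -, h⟩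
    cases h
  · simp only [Finset.disjoint_left, Finset.mem_union, Finset.mem_image]
    rintro _ (⟨e, -, rfl⟩ | ⟨p, -, rfl⟩) ⟨a, -, h⟩ <;> cases h

/-- Deletion of the cross labelled `a`, for any natural number `a`; this is `deleteCross` when
`a < g.crosses.length`, and a junk value otherwise. -/
def deleteCrossAt (g : OddXGraph) (a : ℕ) : OddXGraph where
  ve := g.ve
  vi := g.vi
  edges := (⟨g.crosses[a]?.getD 0, g.crosses[a]?.getD 0, false⟩ : OEdge) ::ₘ g.edges
  crosses := g.crosses.eraseIdx a

/-- The graph obtained when the coboundary acts at one site. -/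
def act (g : OddXGraph) : Site → OddXGraph
  | .edge e => g.contractEdge e
  | .arc i j => g.contractArc i j
  | .cross a => g.deleteCrossAt a

/-- The sign with which the action at one site enters the coboundary. -/
noncomputable def siteSign (g : OddXGraph) : Site → ℝ
  | .edge e => csign e.src e.tgt
  | .arc i j => csign i j
  | .cross a => (-1) ^ (g.degX + (a : ℤ) + 1)

/-! ### Classes of graphs -/

/-- The class of a graph in the extended odd graph complex. -/
noncomputable def toDoX (g : OddXGraph) : DoX :=
  Submodule.Quotient.mk (p := oddXRelations) (Finsupp.single g 1)

/-- The contribution of one site to the coboundary. -/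
noncomputable def siteTerm (g : OddXGraph) (s : Site) : DoX := g.siteSign s • (g.act s).toDoX

/-- The class of `δ̃ g` in the extended odd graph complex. -/
noncomputable def deltaX (g : OddXGraph) : DoX :=
  Submodule.Quotient.mk (p := oddXRelations) (deltaXGen g)

lemma toDoX_eq_zero {g : OddXGraph} (h : ¬g.IsAdmissible) : g.toDoX = 0 := by
  rw [toDoX, Submodule.Quotient.mk_eq_zero]
  apply Submodule.subset_span
  rw [isAdmissible_iff, not_and_or, not_and_or, not_not, not_not] at h
  rcases h with h | h | h
  · exact Or.inl (Or.inl (Or.inl ⟨g, h, rfl⟩))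
  · exact Or.inl (Or.inl (Or.inr ⟨g, h, rfl⟩))
  · exact Or.inl (Or.inr ⟨g, h, rfl⟩)

lemma toDoX_eq_smul {g g' : OddXGraph} {ε : ℝ} (h : OddXRel g g' ε) :
    g.toDoX = ε • g'.toDoX := by
  rw [toDoX, toDoX, ← Submodule.Quotient.mk_smul, Submodule.Quotient.eq]
  exact Submodule.subset_span (Or.inr ⟨g, g', ε, h, rfl⟩)

lemma deltaX_eq_zero {g : OddXGraph} (h : ¬g.IsAdmissible) : g.deltaX = 0 := by
  rw [isAdmissible_iff] at h
  rw [deltaX, deltaXGen, if_neg h, Submodule.Quotient.mk_zero]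

lemma deltaX_eq_sum {g : OddXGraph} (hg : g.IsAdmissible) :
    g.deltaX = ∑ s ∈ g.sites, g.siteTerm s := by
  rw [deltaX, deltaXGen, if_pos (isAdmissible_iff.1 hg), sum_sites, ← Submodule.mkQ_apply,
    map_add, map_add, map_multiset_sum, map_list_sum, map_list_sum, Multiset.map_map,
    List.map_map, List.map_map]
  congr 1
  · congr 1
    · rw [Finset.sum, Multiset.toFinset_val, Multiset.dedup_eq_self.2 (hg.nodup.filter _)]
      rfl
    · rw [List.sum_toFinset _ g.nodup_arcs]
      rfl
  · rw [Finset.sum_range, Fin.sum_univ_def]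
    congr 1
    refine List.map_congr_left fun a _ => ?_
    have hdelete : g.deleteCross a = g.deleteCrossAt a := by simp [deleteCross, deleteCrossAt]
    simp only [Function.comp_apply, map_smul, hdelete]
    rfl

end OddXGraph

lemma exists_mergeMap_eq {i j n w : ℕ} (hi : i < n) (hj : j < n)
    (hw : w < n - 1) : ∃ v < n, v ≠ max i j ∧ mergeMap i j v = w := by
  by_cases hlt : w < max i j
  · refine ⟨w, by omega, by omega, ?_⟩
    unfold mergeMap
    split_ifs <;> omega
  · refine ⟨w + 1, by omega, by omega, ?_⟩
    unfold mergeMap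
    split_ifs <;> omega

namespace OEdge

lemma incidence_le_incidence {μ : ℕ → ℕ} {e e' : OEdge} (hsrc : e'.src = μ e.src)
    (htgt : e'.tgt = μ e.tgt) (v : ℕ) : e.incidence v ≤ e'.incidence (μ v) := by
  unfold incidence
  rw [hsrc, htgt]
  gcongr <;> split_ifs <;> simp_all

lemma incidence_add_le_incidence_mergeMap {i j : ℕ} (hij : i ≠ j) (e : OEdge) :
    e.incidence i + e.incidence j ≤ (e.map (mergeMap i j)).incidence (min i j) := by
  have split_end (x : ℕ) : (if x = i then 1 else 0) + (if x = j then 1 else 0) ≤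
      if mergeMap i j x = min i j then 1 else 0 := by
    by_cases hi : x = i
    · subst hi
      simp [mergeMap_left, hij]
    · by_cases hj : x = j
      · subst hj
        simp [mergeMap_right, hi]
      · simp [hi, hj]
  have hsrc := split_end e.src
  have htgt := split_end e.tgt
  unfold incidence
  change _ ≤ (if mergeMap i j e.src = min i j then 1 else 0) +
    (if mergeMap i j e.tgt = min i j then 1 else 0)
  omega

end OEdge

namespace OddXGraph

lemma connected_of_map {g g' : OddXGraph} (hg : g.Connected) (f : ℕ → ℕ)
    (hsurj : ∀ w < g'.nv, ∃ v < g.nv, f v = w)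
    (hadj : ∀ a b, g.adj a b → f a = f b ∨ g'.adj (f a) (f b)) : g'.Connected := by
  have hlift (a b : ℕ) (h : Relation.ReflTransGen g.adj a b) :
      Relation.ReflTransGen g'.adj (f a) (f b) := by
    induction h with
    | refl => exact .refl
    | tail _ hbc ih =>
      rcases hadj _ _ hbc with heq | hadj'
      · rwa [← heq]
      · exact ih.tail hadj'
  intro a b ha hb
  obtain ⟨x, hx, rfl⟩ := hsurj a ha
  obtain ⟨y, hy, rfl⟩ := hsurj b hb
  exact hlift x y (hg x y hx hy)

lemma adj_of_edge {g : OddXGraph} {e : OEdge} (he : e ∈ g.edges) {a b : ℕ}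
    (h : (e.src = a ∧ e.tgt = b) ∨ (e.src = b ∧ e.tgt = a)) : g.adj a b :=
  Or.inl ⟨e, he, h⟩

lemma IsAdmissible.vi_pos {g : OddXGraph} (hg : g.IsAdmissible) {e : OEdge} (he : e ∈ g.edges)
    (hreg : g.isRegular e) : 0 < g.vi := by
  have hsrc := hg.src_lt he
  have htgt := hg.tgt_lt he
  have hext := hreg.2
  unfold nv at hsrc htgt
  omega

section ContractEdge

variable {g : OddXGraph} {e : OEdge}

lemma nv_contractEdge (hg : g.IsAdmissible) (he : e ∈ g.edges) (hreg : g.isRegular e) :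
    (g.contractEdge e).nv = g.nv - 1 := by
  have hvi := hg.vi_pos he hreg
  simp only [nv, contractEdge]
  omega

lemma mem_edges_contractEdge {f : OEdge} :
    f ∈ (g.contractEdge e).edges ↔
      ∃ f₀ ∈ g.edges.erase e, f₀.map (mergeMap e.src e.tgt) = f :=
  Multiset.mem_map

lemma valence_le_valence_contractEdge (he : e ∈ g.edges) {v : ℕ} (hsrc : v ≠ e.src)
    (htgt : v ≠ e.tgt) : g.valence v ≤ (g.contractEdge e).valence (mergeMap e.src e.tgt v) := by
  change (g.edges.map (OEdge.incidence v)).sum ≤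
    (((g.edges.erase e).map (OEdge.map _)).map (OEdge.incidence _)).sum
  have hzero : e.incidence v = 0 := by simp [OEdge.incidence, hsrc.symm, htgt.symm]
  rw [← Multiset.cons_erase he, Multiset.map_cons, Multiset.sum_cons, hzero, zero_add,
    Multiset.erase_cons_head, Multiset.map_map]
  exact Multiset.sum_map_le_sum_map _ _ fun f _ => OEdge.incidence_le_incidence rfl rfl v

lemma valence_add_valence_le_contractEdge (he : e ∈ g.edges) (hne : e.src ≠ e.tgt) :
    g.valence e.src + g.valence e.tgt ≤ (g.contractEdge e).valence (min e.src e.tgt) + 2 := by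
  change (g.edges.map (OEdge.incidence e.src)).sum + (g.edges.map (OEdge.incidence e.tgt)).sum ≤
    (((g.edges.erase e).map (OEdge.map _)).map (OEdge.incidence _)).sum + 2
  have htwo : e.incidence e.src + e.incidence e.tgt = 2 := by
    simp [OEdge.incidence, hne, hne.symm]
  rw [← Multiset.sum_map_add, ← Multiset.cons_erase he, Multiset.map_cons, Multiset.sum_cons,
    htwo, add_comm 2, Multiset.erase_cons_head, Multiset.map_map]
  exact Nat.add_le_add_right (Multiset.sum_map_le_sum_map _ _ fun f _ =>
    OEdge.incidence_add_le_incidence_mergeMap hne f) 2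

lemma three_le_valence_contractEdge (hg : g.IsAdmissible) (he : e ∈ g.edges)
    (hreg : g.isRegular e) {w : ℕ} (hw : g.ve ≤ w) (hw' : w < (g.contractEdge e).nv) :
    3 ≤ (g.contractEdge e).valence w := by
  rw [nv_contractEdge hg he hreg] at hw'
  obtain ⟨v, hv, hmax, rfl⟩ := exists_mergeMap_eq (hg.src_lt he) (hg.tgt_lt he) hw'
  have hve : g.ve ≤ v := hw.trans (mergeMap_le _ _ _)
  by_cases hmin : v = min e.src e.tgt
  · have hmerge : mergeMap e.src e.tgt v = min e.src e.tgt := if_pos (by omega)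
    have hsrc := hg.three_le_valence (v := e.src) (by omega) (hg.src_lt he)
    have htgt := hg.three_le_valence (v := e.tgt) (by omega) (hg.tgt_lt he)
    have hsum := valence_add_valence_le_contractEdge he hreg.1
    rw [hmerge]
    omega
  · exact (hg.three_le_valence hve hv).trans
      (valence_le_valence_contractEdge he (by omega) (by omega))

lemma one_le_valence_or_mem_crosses_contractEdge (hg : g.IsAdmissible) (he : e ∈ g.edges)
    (hreg : g.isRegular e) {w : ℕ} (hw : w < g.ve) :
    1 ≤ (g.contractEdge e).valence w ∨ w ∈ (g.contractEdge e).crosses := by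
  have hext := hreg.2
  by_cases hend : w = e.src ∨ w = e.tgt
  · have hmin : w = min e.src e.tgt := by omega
    have hmax : 3 ≤ g.valence (max e.src e.tgt) :=
      hg.three_le_valence (by omega) (max_lt (hg.src_lt he) (hg.tgt_lt he))
    have hsum := valence_add_valence_le_contractEdge he hreg.1
    have hle : g.valence (max e.src e.tgt) ≤ g.valence e.src + g.valence e.tgt := by
      rcases max_choice e.src e.tgt with h | h <;> rw [h] <;> omega
    left
    rw [hmin]
    omega
  · rw [not_or] at hend
    have hfix : mergeMap e.src e.tgt w = w :=
      mergeMap_eq_self_of_lt (by omega)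
    rcases hg.one_le_valence_or_mem_crosses hw with h | h
    · have hle := valence_le_valence_contractEdge he hend.1 hend.2
      rw [hfix] at hle
      exact Or.inl (h.trans hle)
    · exact Or.inr (List.mem_map.2 ⟨w, h, hfix⟩)

lemma connected_contractEdge (hg : g.IsAdmissible) (he : e ∈ g.edges) (hreg : g.isRegular e) :
    (g.contractEdge e).Connected := by
  refine connected_of_map hg.connected (mergeMap e.src e.tgt) (fun w hw => ?_) ?_
  · rw [nv_contractEdge hg he hreg] at hw
    obtain ⟨v, hv, -, hvw⟩ := exists_mergeMap_eq (hg.src_lt he) (hg.tgt_lt he) hw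
    exact ⟨v, hv, hvw⟩
  · rintro a b (⟨f, hf, hab⟩ | ⟨ha, hb⟩)
    · by_cases hfe : f = e
      · left
        rw [mergeMap_eq_iff hreg.1]
        subst hfe
        omega
      · refine Or.inr (adj_of_edge (Multiset.mem_map_of_mem _
          ((Multiset.mem_erase_of_ne hfe).2 hf)) ?_)
        rcases hab with ⟨rfl, rfl⟩ | ⟨rfl, rfl⟩
        exacts [Or.inl ⟨rfl, rfl⟩, Or.inr ⟨rfl, rfl⟩]
    · exact Or.inr (Or.inr ⟨(mergeMap_le _ _ _).trans_lt ha, (mergeMap_le _ _ _).trans_lt hb⟩)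

lemma isValid_contractEdge (hg : g.IsAdmissible) (he : e ∈ g.edges) (hreg : g.isRegular e) :
    (g.contractEdge e).IsValid := by
  refine ⟨fun f hf => ?_, fun f hf hne => ?_, fun v hv hv' =>
    three_le_valence_contractEdge hg he hreg hv hv', fun v hv =>
    one_le_valence_or_mem_crosses_contractEdge hg he hreg hv, fun c hc => ?_,
    connected_contractEdge hg he hreg⟩
  · obtain ⟨f₀, hf₀, rfl⟩ := mem_edges_contractEdge.1 hf
    have hf₀ := Multiset.mem_of_mem_erase hf₀
    rw [nv_contractEdge hg he hreg]
    exact ⟨mergeMap_lt_pred hreg.1 (hg.src_lt he) (hg.tgt_lt he) (hg.src_lt hf₀),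
      mergeMap_lt_pred hreg.1 (hg.src_lt he) (hg.tgt_lt he) (hg.tgt_lt hf₀)⟩
  · obtain ⟨f₀, hf₀, rfl⟩ := mem_edges_contractEdge.1 hf
    change f₀.lp = false
    exact hg.lp_eq_false (Multiset.mem_of_mem_erase hf₀) fun h =>
      hne (congrArg (mergeMap e.src e.tgt) h)
  · obtain ⟨c₀, hc₀, rfl⟩ := List.mem_map.1 hc
    exact (mergeMap_le _ _ _).trans_lt (hg.cross_lt hc₀)

lemma not_hasInternalLoop_contractEdge (hg : g.IsAdmissible) (he : e ∈ g.edges)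
    (hreg : g.isRegular e) : ¬(g.contractEdge e).hasInternalLoop := by
  rintro ⟨f, hf, hloop, hint⟩
  obtain ⟨f₀, hf₀, rfl⟩ := mem_edges_contractEdge.1 hf
  have hne : f₀ ≠ e := (hg.nodup.mem_erase_iff.1 hf₀).1
  have hf₀ := Multiset.mem_of_mem_erase hf₀
  have hle : g.ve ≤ f₀.src := hint.trans (mergeMap_le _ _ _)
  rcases eq_or_ne f₀.src f₀.tgt with h | h
  · exact absurd (hg.src_lt_ve_of_loop hf₀ h) hle.not_gt
  · refine hne (hg.eq_of_ends_eq hf₀ he (OEdge.ends_eq_iff.2 ?_))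
    have := (mergeMap_eq_iff hreg.1 _ _).1 hloop
    omega

end ContractEdge

section ContractArc

variable {g : OddXGraph} {i j : ℕ}

lemma nv_contractArc (h : IsArc g.ve i j) : (g.contractArc i j).nv = g.nv - 1 := by
  have hi := h.left_lt
  simp only [nv, contractArc]
  omega

lemma mem_edges_contractArc {f : OEdge} :
    f ∈ (g.contractArc i j).edges ↔ ∃ f₀ ∈ g.edges, f₀.contractArc i j = f :=
  Multiset.mem_map

lemma valence_le_valence_contractArc (v : ℕ) :
    g.valence v ≤ (g.contractArc i j).valence (mergeMap i j v) := by
  change _ ≤ ((g.edges.map (OEdge.contractArc i j)).map (OEdge.incidence _)).sum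
  rw [Multiset.map_map]
  exact Multiset.sum_map_le_sum_map _ _ fun f _ =>
    OEdge.incidence_le_incidence (OEdge.contractArc_src i j f) (OEdge.contractArc_tgt i j f) v

lemma connected_contractArc (hg : g.IsAdmissible) (h : IsArc g.ve i j) :
    (g.contractArc i j).Connected := by
  have hi : i < g.nv := h.left_lt.trans_le (Nat.le_add_right _ _)
  have hj : j < g.nv := h.right_lt.trans_le (Nat.le_add_right _ _)
  refine connected_of_map hg.connected (mergeMap i j) (fun w hw => ?_) ?_
  · rw [nv_contractArc h] at hw
    obtain ⟨v, hv, -, hvw⟩ := exists_mergeMap_eq hi hj hw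
    exact ⟨v, hv, hvw⟩
  · rintro a b (⟨f, hf, hab⟩ | ⟨ha, hb⟩)
    · refine Or.inr (adj_of_edge (mem_edges_contractArc.2 ⟨f, hf, rfl⟩) ?_)
      rw [OEdge.contractArc_src, OEdge.contractArc_tgt]
      rcases hab with ⟨rfl, rfl⟩ | ⟨rfl, rfl⟩
      exacts [Or.inl ⟨rfl, rfl⟩, Or.inr ⟨rfl, rfl⟩]
    · exact Or.inr (Or.inr ⟨mergeMap_lt_pred h.ne h.left_lt h.right_lt ha,
        mergeMap_lt_pred h.ne h.left_lt h.right_lt hb⟩)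

lemma isValid_contractArc (hg : g.IsAdmissible) (h : IsArc g.ve i j) :
    (g.contractArc i j).IsValid := by
  have hi : i < g.nv := h.left_lt.trans_le (Nat.le_add_right _ _)
  have hj : j < g.nv := h.right_lt.trans_le (Nat.le_add_right _ _)
  refine ⟨fun f hf => ?_, fun f hf hne => ?_, fun w hw hw' => ?_, fun w hw => ?_,
    fun c hc => ?_, connected_contractArc hg h⟩
  · obtain ⟨f₀, hf₀, rfl⟩ := mem_edges_contractArc.1 hf
    rw [nv_contractArc h, OEdge.contractArc_src, OEdge.contractArc_tgt]
    exact ⟨mergeMap_lt_pred h.ne hi hj (hg.src_lt hf₀),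
      mergeMap_lt_pred h.ne hi hj (hg.tgt_lt hf₀)⟩
  · obtain ⟨f₀, hf₀, rfl⟩ := mem_edges_contractArc.1 hf
    rw [OEdge.contractArc_src, OEdge.contractArc_tgt] at hne
    rw [OEdge.contractArc_lp_of_ne hne]
    exact hg.lp_eq_false hf₀ fun heq => hne (congrArg (mergeMap i j) heq)
  · rw [nv_contractArc h] at hw'
    obtain ⟨v, hv, -, rfl⟩ := exists_mergeMap_eq hi hj hw'
    have hve : g.ve ≤ v := not_lt.1 fun hlt =>
      hw.not_gt (mergeMap_lt_pred h.ne h.left_lt h.right_lt hlt)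
    exact (hg.three_le_valence hve hv).trans (valence_le_valence_contractArc v)
  · obtain ⟨v, hv, -, rfl⟩ := exists_mergeMap_eq h.left_lt h.right_lt hw
    exact (hg.one_le_valence_or_mem_crosses hv).imp
      (fun hval => hval.trans (valence_le_valence_contractArc v)) (List.mem_map_of_mem ·)
  · obtain ⟨c₀, hc₀, rfl⟩ := List.mem_map.1 hc
    exact mergeMap_lt_pred h.ne h.left_lt h.right_lt (hg.cross_lt hc₀)

lemma not_hasInternalLoop_contractArc (hg : g.IsAdmissible) (h : IsArc g.ve i j) :
    ¬(g.contractArc i j).hasInternalLoop := by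
  rintro ⟨f, hf, hloop, hint⟩
  obtain ⟨f₀, hf₀, rfl⟩ := mem_edges_contractArc.1 hf
  rw [OEdge.contractArc_src, OEdge.contractArc_tgt, mergeMap_eq_iff h.ne] at hloop
  rw [OEdge.contractArc_src] at hint
  refine hint.not_gt (mergeMap_lt_pred h.ne h.left_lt h.right_lt ?_)
  rcases hloop with heq | ⟨rfl | hsrc, -⟩
  · exact hg.src_lt_ve_of_loop hf₀ heq
  · exact h.left_lt
  · exact hsrc ▸ h.right_lt

end ContractArc

section DeleteCross

variable {g : OddXGraph} {a : ℕ}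

/-- The external vertex carrying the cross labelled `a`; it is `0` if there is no such cross. -/
def crossVertex (g : OddXGraph) (a : ℕ) : ℕ := g.crosses[a]?.getD 0

lemma edges_deleteCrossAt (g : OddXGraph) (a : ℕ) :
    (g.deleteCrossAt a).edges = ⟨g.crossVertex a, g.crossVertex a, false⟩ ::ₘ g.edges := rfl

lemma crossVertex_eq_getElem (ha : a < g.crosses.length) : g.crossVertex a = g.crosses[a] := by
  simp [crossVertex, ha]

lemma crossVertex_lt (hg : g.IsAdmissible) (ha : a < g.crosses.length) :
    g.crossVertex a < g.ve :=
  crossVertex_eq_getElem ha ▸ hg.cross_lt (List.getElem_mem ha)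

lemma valence_deleteCrossAt (v : ℕ) :
    (g.deleteCrossAt a).valence v =
      OEdge.incidence v ⟨g.crossVertex a, g.crossVertex a, false⟩ + g.valence v := by
  unfold valence
  rw [edges_deleteCrossAt, Multiset.map_cons, Multiset.sum_cons]
  rfl

lemma isValid_deleteCrossAt (hg : g.IsAdmissible) (ha : a < g.crosses.length) :
    (g.deleteCrossAt a).IsValid := by
  have hlt := crossVertex_lt hg ha
  have hnv : g.ve ≤ g.nv := Nat.le_add_right _ _
  have hval (v : ℕ) : g.valence v ≤ (g.deleteCrossAt a).valence v :=
    (Nat.le_add_left _ _).trans (valence_deleteCrossAt v).ge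
  refine ⟨fun f hf => ?_, fun f hf hne => ?_, fun v hv hv' =>
    (hg.three_le_valence hv hv').trans (hval v), fun v hv => ?_,
    fun c hc => hg.cross_lt (List.mem_of_mem_eraseIdx hc), ?_⟩
  · rcases Multiset.mem_cons.1 hf with rfl | hf
    · exact ⟨hlt.trans_le hnv, hlt.trans_le hnv⟩
    · exact hg.isValid.1 f hf
  · rcases Multiset.mem_cons.1 hf with rfl | hf
    · rfl
    · exact hg.lp_eq_false hf hne
  · rcases eq_or_ne v (g.crossVertex a) with rfl | hne
    · left
      simp only [valence_deleteCrossAt, OEdge.incidence, if_true]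
      omega
    · refine (hg.one_le_valence_or_mem_crosses hv).imp (·.trans (hval v)) fun hmem => ?_
      rw [crossVertex_eq_getElem ha] at hne
      obtain ⟨b, hb, rfl⟩ := List.getElem_of_mem hmem
      exact List.mem_eraseIdx_iff_getElem.2 ⟨b, hb, fun hba => hne (by subst hba; rfl), rfl⟩
  · refine connected_of_map hg.connected id (fun w hw => ⟨w, hw, rfl⟩) fun x y hxy => Or.inr ?_
    exact hxy.imp_left fun ⟨f, hf, h⟩ => ⟨f, Multiset.mem_cons_of_mem hf, h⟩

lemma not_hasInternalLoop_deleteCrossAt (hg : g.IsAdmissible) (ha : a < g.crosses.length) :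
    ¬(g.deleteCrossAt a).hasInternalLoop := by
  rintro ⟨f, hf, hloop, hint⟩
  rcases Multiset.mem_cons.1 hf with rfl | hf
  · exact (crossVertex_lt hg ha).not_ge hint
  · exact hg.not_hasInternalLoop ⟨f, hf, hloop, hint⟩

end DeleteCross

lemma isValid_act {g : OddXGraph} (hg : g.IsAdmissible) {s : Site} (hs : s ∈ g.sites) :
    (g.act s).IsValid := by
  cases s with
  | edge e =>
    obtain ⟨he, hreg⟩ := edge_mem_sites.1 hs
    exact isValid_contractEdge hg he hreg
  | arc i j => exact isValid_contractArc hg (arc_mem_sites.1 hs)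
  | cross a => exact isValid_deleteCrossAt hg (cross_mem_sites.1 hs)

lemma isAdmissible_act_iff {g : OddXGraph} (hg : g.IsAdmissible) {s : Site} (hs : s ∈ g.sites) :
    (g.act s).IsAdmissible ↔ ((g.act s).edges.map OEdge.ends).Nodup := by
  refine ⟨fun h => h.nodup_ends, fun h => ⟨isValid_act hg hs, h, ?_⟩⟩
  cases s with
  | edge e =>
    obtain ⟨he, hreg⟩ := edge_mem_sites.1 hs
    exact not_hasInternalLoop_contractEdge hg he hreg
  | arc i j => exact not_hasInternalLoop_contractArc hg (arc_mem_sites.1 hs)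
  | cross a => exact not_hasInternalLoop_deleteCrossAt hg (cross_mem_sites.1 hs)

end OddXGraph

/-! ### Relabelling of vertices -/

namespace OEdge

lemma contractArc_map {f f' : ℕ → ℕ} (hf : f.Injective) {i j : ℕ}
    (h : ∀ v, mergeMap (f i) (f j) (f v) = f' (mergeMap i j v)) (e : OEdge) :
    (e.map f).contractArc (f i) (f j) = (e.contractArc i j).map f' := by
  have hmin := h i
  rw [mergeMap_left, mergeMap_left] at hmin
  unfold contractArc
  simp only [map, hf.eq_iff]
  split_ifs <;> simp [hmin, h]

end OEdge

/-- The action of a vertex map on sites. -/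
def OddXGraph.Site.map (f : ℕ → ℕ) : OddXGraph.Site → OddXGraph.Site
  | .edge e => .edge (e.map f)
  | .arc i j => .arc (f i) (f j)
  | .cross a => .cross a

namespace OddXGraph

/-- The action of a vertex map on a graph. -/
def relabel (f : ℕ → ℕ) (g : OddXGraph) : OddXGraph where
  ve := g.ve
  vi := g.vi
  edges := g.edges.map (OEdge.map f)
  crosses := g.crosses.map f

lemma relabel_id (g : OddXGraph) : relabel id g = g := by
  have hmap : OEdge.map id = id := funext OEdge.map_id
  simp [relabel, hmap]

lemma relabel_relabel (f f' : ℕ → ℕ) (g : OddXGraph) :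
    relabel f' (relabel f g) = relabel (f' ∘ f) g := by
  simp only [relabel, Multiset.map_map, List.map_map]
  rfl

lemma relabel_symm_relabel (σ : Equiv.Perm ℕ) (g : OddXGraph) :
    relabel σ.symm (relabel σ g) = g := by
  rw [relabel_relabel, Equiv.symm_comp_self, relabel_id]

lemma degX_relabel (f : ℕ → ℕ) (g : OddXGraph) : (relabel f g).degX = g.degX := by
  simp [degX, relabel, numEdges, numCrosses]

lemma valence_relabel (σ : Equiv.Perm ℕ) (g : OddXGraph) (v : ℕ) :
    (relabel σ g).valence (σ v) = g.valence v := by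
  change ((g.edges.map (OEdge.map σ)).map _).sum = _
  rw [Multiset.map_map]
  simp only [valence, Function.comp_def, OEdge.map, σ.injective.eq_iff]

/-- A vertex permutation which preserves the external vertices, the arcs of the circle and the
set of all vertices. -/
structure IsRelabelling (g : OddXGraph) (σ : Equiv.Perm ℕ) : Prop where
  lt_ve_iff : ∀ v, σ v < g.ve ↔ v < g.ve
  lt_nv_iff : ∀ v, σ v < g.nv ↔ v < g.nv
  isArc_iff : ∀ i j, IsArc g.ve (σ i) (σ j) ↔ IsArc g.ve i j

namespace IsRelabelling

variable {g : OddXGraph} {σ : Equiv.Perm ℕ} (h : g.IsRelabelling σ)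
include h

lemma symm : (relabel σ g).IsRelabelling σ.symm where
  lt_ve_iff v := by
    change σ.symm v < g.ve ↔ v < g.ve
    rw [← h.lt_ve_iff, σ.apply_symm_apply]
  lt_nv_iff v := by
    change σ.symm v < g.nv ↔ v < g.nv
    rw [← h.lt_nv_iff, σ.apply_symm_apply]
  isArc_iff i j := by
    change IsArc g.ve _ _ ↔ IsArc g.ve _ _
    rw [← h.isArc_iff, σ.apply_symm_apply, σ.apply_symm_apply]

lemma connected (hg : g.Connected) : (relabel σ g).Connected := by
  refine connected_of_map hg σ (fun w hw => ⟨σ.symm w, (h.symm.lt_nv_iff w).2 hw,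
    σ.apply_symm_apply w⟩) fun a b hab => Or.inr ?_
  refine hab.imp ?_ (And.imp (h.lt_ve_iff a).2 (h.lt_ve_iff b).2)
  rintro ⟨e, he, hab⟩
  exact ⟨e.map σ, Multiset.mem_map_of_mem _ he, hab.imp
    (And.imp (congrArg σ) (congrArg σ)) (And.imp (congrArg σ) (congrArg σ))⟩

lemma isValid (hg : g.IsAdmissible) : (relabel σ g).IsValid := by
  refine ⟨fun e he => ?_, fun e he hne => ?_, σ.surjective.forall.2 fun v hv hv' => ?_,
    σ.surjective.forall.2 fun v hv => ?_, fun c hc => ?_, h.connected hg.connected⟩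
  · obtain ⟨e₀, he₀, rfl⟩ := Multiset.mem_map.1 he
    exact ⟨(h.lt_nv_iff _).2 (hg.src_lt he₀), (h.lt_nv_iff _).2 (hg.tgt_lt he₀)⟩
  · obtain ⟨e₀, he₀, rfl⟩ := Multiset.mem_map.1 he
    change e₀.lp = false
    exact hg.lp_eq_false he₀ fun heq => hne (congrArg σ heq)
  · rw [valence_relabel]
    exact hg.three_le_valence (not_lt.1 fun hlt => hv.not_gt ((h.lt_ve_iff v).2 hlt))
      ((h.lt_nv_iff v).1 hv')
  · rw [valence_relabel]
    exact (hg.one_le_valence_or_mem_crosses ((h.lt_ve_iff v).1 hv)).imp_right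
      (List.mem_map_of_mem ·)
  · obtain ⟨c₀, hc₀, rfl⟩ := List.mem_map.1 hc
    exact (h.lt_ve_iff c₀).2 (hg.cross_lt hc₀)

lemma isAdmissible (hg : g.IsAdmissible) : (relabel σ g).IsAdmissible := by
  refine ⟨h.isValid hg, ?_, ?_⟩
  · have hends : (relabel σ g).edges.map OEdge.ends =
        (g.edges.map OEdge.ends).map (Sym2.map σ) := by
      simp only [relabel, Multiset.map_map]
      rfl
    rw [hends]
    exact hg.nodup_ends.map (Sym2.map.injective σ.injective)
  · rintro ⟨e, he, hloop, hint⟩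
    obtain ⟨e₀, he₀, rfl⟩ := Multiset.mem_map.1 he
    exact hint.not_gt ((h.lt_ve_iff _).2
      (hg.src_lt_ve_of_loop he₀ (σ.injective hloop)))

lemma isAdmissible_relabel_iff : (relabel σ g).IsAdmissible ↔ g.IsAdmissible := by
  refine ⟨fun hg => ?_, h.isAdmissible⟩
  simpa only [relabel_symm_relabel] using h.symm.isAdmissible hg

lemma map_mem_sites {s : Site} (hs : s ∈ g.sites) : s.map σ ∈ (relabel σ g).sites := by
  cases s with
  | edge e =>
    obtain ⟨he, hne, hext⟩ := edge_mem_sites.1 hs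
    refine edge_mem_sites.2 ⟨Multiset.mem_map_of_mem _ he, σ.injective.ne hne, fun hlt => hext ?_⟩
    exact hlt.imp (h.lt_ve_iff _).1 (h.lt_ve_iff _).1
  | arc i j => exact arc_mem_sites.2 ((h.isArc_iff i j).2 (arc_mem_sites.1 hs))
  | cross a =>
    have ha := cross_mem_sites.1 hs
    exact cross_mem_sites.2 (by simpa only [relabel, List.length_map] using ha)

end IsRelabelling

/-! ### The coboundary commutes with the sign relations -/

lemma deltaX_eq_smul_of_bij {g g' : OddXGraph} {ε : ℝ} (hadm : g.IsAdmissible ↔ g'.IsAdmissible)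
    (T T' : Site → Site) (hT : g.IsAdmissible → ∀ s ∈ g.sites, T s ∈ g'.sites)
    (hT' : g.IsAdmissible → ∀ s ∈ g'.sites, T' s ∈ g.sites)
    (hleft : g.IsAdmissible → ∀ s ∈ g.sites, T' (T s) = s)
    (hright : g.IsAdmissible → ∀ s ∈ g'.sites, T (T' s) = s)
    (hterm : g.IsAdmissible → ∀ s ∈ g.sites, g.siteTerm s = ε • g'.siteTerm (T s)) :
    g.deltaX = ε • g'.deltaX := by
  by_cases hg : g.IsAdmissible
  · rw [deltaX_eq_sum hg, deltaX_eq_sum (hadm.1 hg), Finset.smul_sum]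
    exact Finset.sum_nbij' T T' (hT hg) (hT' hg) (hleft hg) (hright hg) (hterm hg)
  · rw [deltaX_eq_zero hg, deltaX_eq_zero (hadm.not.1 hg), smul_zero]

lemma Site.map_symm_map (σ : Equiv.Perm ℕ) (s : Site) : (s.map σ).map σ.symm = s := by
  cases s <;> simp [Site.map, OEdge.map]

lemma IsRelabelling.deltaX_eq_smul {g : OddXGraph} {σ : Equiv.Perm ℕ} {ε : ℝ}
    (h : g.IsRelabelling σ)
    (hterm : g.IsAdmissible → ∀ s ∈ g.sites,
      g.siteTerm s = ε • (relabel σ g).siteTerm (s.map σ)) :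
    g.deltaX = ε • (relabel σ g).deltaX := by
  refine deltaX_eq_smul_of_bij h.isAdmissible_relabel_iff.symm (Site.map σ) (Site.map σ.symm)
    (fun _ s hs => h.map_mem_sites hs) (fun _ s hs => ?_)
    (fun _ s _ => Site.map_symm_map σ s) (fun _ s _ => Site.map_symm_map σ.symm s) hterm
  simpa only [relabel_symm_relabel] using h.symm.map_mem_sites hs

lemma contractEdge_relabel {g : OddXGraph} {f f' : ℕ → ℕ} {e : OEdge} (he : e ∈ g.edges)
    (h : ∀ v, mergeMap (f e.src) (f e.tgt) (f v) = f' (mergeMap e.src e.tgt v)) :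
    (relabel f g).contractEdge (e.map f) = relabel f' (g.contractEdge e) := by
  unfold relabel contractEdge
  simp only [mk.injEq, true_and]
  rw [← Multiset.map_erase_of_mem _ _ he]
  simp only [Multiset.map_map, List.map_map]
  refine ⟨Multiset.map_congr rfl fun x _ => ?_, List.map_congr_left fun v _ => h v⟩
  simp [OEdge.map, h]

lemma contractArc_relabel {g : OddXGraph} {f f' : ℕ → ℕ} (hf : f.Injective) {i j : ℕ}
    (h : ∀ v, mergeMap (f i) (f j) (f v) = f' (mergeMap i j v)) :
    (relabel f g).contractArc (f i) (f j) = relabel f' (g.contractArc i j) := by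
  unfold relabel contractArc
  simp only [mk.injEq, true_and, Multiset.map_map, List.map_map]
  exact ⟨Multiset.map_congr rfl fun e _ => OEdge.contractArc_map hf h e,
    List.map_congr_left fun v _ => h v⟩

lemma deleteCrossAt_relabel {g : OddXGraph} (f : ℕ → ℕ) {a : ℕ} (ha : a < g.crosses.length) :
    (relabel f g).deleteCrossAt a = relabel f (g.deleteCrossAt a) := by
  unfold relabel deleteCrossAt
  simp [ha, OEdge.map, List.eraseIdx_map]

lemma siteTerm_cross_relabel {g : OddXGraph} {f : ℕ → ℕ} {ε : ℝ} {a : ℕ}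
    (ha : a < g.crosses.length)
    (h : (g.deleteCrossAt a).toDoX = ε • (relabel f (g.deleteCrossAt a)).toDoX) :
    g.siteTerm (.cross a) = ε • (relabel f g).siteTerm (.cross a) := by
  simp only [siteTerm, act, siteSign, degX_relabel, deleteCrossAt_relabel f ha]
  rw [h, smul_comm]

lemma oddXRel_relabel (g : OddXGraph) (π : Equiv.Perm (Fin g.vi)) (r : ℕ) :
    OddXRel g (relabel (permVertexX g.ve g.vi π r) g)
      ((Equiv.Perm.sign π : ℤ) * (Equiv.Perm.sign (finRotate g.ve ^ r) : ℤ)) := by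
  refine ⟨rfl, rfl, π, r, g.edges.map fun e => (permOEdgeX g.ve g.vi π r e, false),
    by simp [relabel], 1, ?_, ?_, fun a => ?_, ?_⟩
  · rw [Multiset.map_map]
    rfl
  · rw [Multiset.map_map]
    exact Multiset.map_congr rfl fun e _ => by simp [permOEdgeX, OEdge.map]
  · simp [relabel]
    rfl
  · simp [Multiset.filter_map]

lemma permVertexX_swap {n m : ℕ} (i j : Fin m) (v : ℕ) :
    permVertexX n m (Equiv.swap i j) 0 v = Equiv.swap (n + i) (n + j) v := by
  unfold permVertexX
  simp only [Equiv.swap_apply_def, Fin.ext_iff]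
  split_ifs with hv <;> first | omega | exact Nat.mod_eq_of_lt hv | (simp; omega)

lemma isRelabelling_swap {g : OddXGraph} {k : ℕ} (hk : g.ve ≤ k) (hk' : k + 1 < g.nv) :
    g.IsRelabelling (Equiv.swap k (k + 1)) where
  lt_ve_iff v := by rw [Equiv.swap_apply_def]; split_ifs <;> omega
  lt_nv_iff v := by rw [Equiv.swap_apply_def]; split_ifs <;> omega
  isArc_iff i j := by simp only [Equiv.swap_apply_def, IsArc]; grind

lemma toDoX_swap {g : OddXGraph} {k : ℕ} (hk : g.ve ≤ k) (hk' : k + 1 < g.nv) :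
    g.toDoX = (-1 : ℝ) • (relabel (Equiv.swap k (k + 1)) g).toDoX := by
  unfold nv at hk'
  have hrel := oddXRel_relabel g
    (Equiv.swap ⟨k - g.ve, by omega⟩ ⟨k + 1 - g.ve, by omega⟩) 0
  have hswap : permVertexX g.ve g.vi
      (Equiv.swap ⟨k - g.ve, by omega⟩ ⟨k + 1 - g.ve, by omega⟩) 0 = Equiv.swap k (k + 1) := by
    funext v
    rw [permVertexX_swap, Nat.add_sub_cancel' hk, Nat.add_sub_cancel' (by omega)]
  rw [hswap, Equiv.Perm.sign_swap (by simp only [ne_eq, Fin.mk.injEq]; omega)] at hrel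
  simpa using toDoX_eq_smul hrel

lemma siteTerm_edge_swap {g : OddXGraph} (hg : g.IsAdmissible) {k : ℕ} (hk : g.ve ≤ k)
    (hk' : k + 1 < g.nv) {e : OEdge} (he : e ∈ g.edges) (hreg : g.isRegular e) :
    g.siteTerm (.edge e) = (-1 : ℝ) •
      (relabel (Equiv.swap k (k + 1)) g).siteTerm (.edge (e.map (Equiv.swap k (k + 1)))) := by
  simp only [siteTerm, siteSign, act]
  by_cases h : max e.src e.tgt = k ∨ max e.src e.tgt = k + 1
  · rw [contractEdge_relabel (f' := id) he (mergeMap_swap_of_max_eq hreg.1 h), relabel_id]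
    change _ = _ • csign (Equiv.swap k (k + 1) e.src) (Equiv.swap k (k + 1) e.tgt) • _
    rw [csign_swap_of_max_eq h, neg_one_smul, neg_smul, neg_neg]
  · rw [not_or] at h
    rw [contractEdge_relabel he (mergeMap_swap_of_max_ne hreg.1 h.1 h.2)]
    change _ = _ • csign (Equiv.swap k (k + 1) e.src) (Equiv.swap k (k + 1) e.tgt) • _
    have hext := hreg.2
    have hsrc := hg.src_lt he
    have htgt := hg.tgt_lt he
    have hnv := nv_contractEdge hg he hreg
    have hve : (g.contractEdge e).ve = g.ve := rfl
    rw [csign_swap_of_max_ne h.1 h.2, smul_comm, ← toDoX_swap]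
    · rw [hve]
      split_ifs <;> omega
    · rw [hnv]
      split_ifs <;> omega

lemma siteTerm_arc_swap {g : OddXGraph} {k : ℕ} (hk : g.ve ≤ k) (hk' : k + 1 < g.nv)
    {i j : ℕ} (h : IsArc g.ve i j) :
    g.siteTerm (.arc i j) = (-1 : ℝ) • (relabel (Equiv.swap k (k + 1)) g).siteTerm
      (.arc (Equiv.swap k (k + 1) i) (Equiv.swap k (k + 1) j)) := by
  have hi := h.left_lt
  have hj := h.right_lt
  simp only [siteTerm, siteSign, act]
  rw [contractArc_relabel (Equiv.injective _)
      (mergeMap_swap_of_max_ne h.ne (by omega) (by omega)),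
    csign_swap_of_max_ne (by omega) (by omega), smul_comm, if_pos (by omega), ← toDoX_swap]
  · simp only [contractArc]
    omega
  · rw [nv_contractArc h]
    omega

lemma deltaX_swap {g : OddXGraph} {k : ℕ} (hk : g.ve ≤ k) (hk' : k + 1 < g.nv) :
    g.deltaX = (-1 : ℝ) • (relabel (Equiv.swap k (k + 1)) g).deltaX := by
  refine (isRelabelling_swap hk hk').deltaX_eq_smul fun hg s hs => ?_
  cases s with
  | edge e =>
    obtain ⟨he, hreg⟩ := edge_mem_sites.1 hs
    exact siteTerm_edge_swap hg hk hk' he hreg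
  | arc i j => exact siteTerm_arc_swap hk hk' (arc_mem_sites.1 hs)
  | cross a => exact siteTerm_cross_relabel (cross_mem_sites.1 hs) (toDoX_swap hk hk')

lemma permVertexX_one_one (n m : ℕ) : permVertexX n m 1 1 = cyclicShift n := by
  funext v
  rw [cyclicShift_apply]
  unfold permVertexX
  split_ifs with h h' h'' <;> first | exact Nat.mod_eq_of_lt h' | skip
  · rw [h'', Nat.mod_self]
  all_goals first | omega | (simp; omega)

lemma isRelabelling_cyclicShift (g : OddXGraph) : g.IsRelabelling (cyclicShift g.ve) where
  lt_ve_iff v := by rw [cyclicShift_apply]; split_ifs <;> omega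
  lt_nv_iff v := by unfold nv; rw [cyclicShift_apply]; split_ifs <;> omega
  isArc_iff i j := by simp only [cyclicShift_apply, IsArc]; grind

lemma sign_finRotate_eq_neg_one_pow (n : ℕ) :
    ((Equiv.Perm.sign (finRotate n) : ℤ) : ℝ) = (-1) ^ (n - 1) := by
  cases n <;> simp [sign_finRotate]

lemma toDoX_cyclicShift (g : OddXGraph) :
    g.toDoX = (-1 : ℝ) ^ (g.ve - 1) • (relabel (cyclicShift g.ve) g).toDoX := by
  have hrel := oddXRel_relabel g 1 1
  rw [permVertexX_one_one, pow_one, sign_finRotate_eq_neg_one_pow] at hrel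
  simpa using toDoX_eq_smul hrel

lemma siteTerm_edge_cyclicShift {g : OddXGraph} {e : OEdge} (he : e ∈ g.edges)
    (hreg : g.isRegular e) :
    g.siteTerm (.edge e) = (-1 : ℝ) ^ (g.ve - 1) •
      (relabel (cyclicShift g.ve) g).siteTerm (.edge (e.map (cyclicShift g.ve))) := by
  simp only [siteTerm, siteSign, act]
  rw [contractEdge_relabel he (mergeMap_cyclicShift_of_not_chord hreg.1 hreg.2)]
  change _ = _ • csign (cyclicShift g.ve e.src) (cyclicShift g.ve e.tgt) • _
  rw [csign_cyclicShift_of_not_chord hreg.2, smul_comm]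
  exact congrArg _ (toDoX_cyclicShift (g.contractEdge e))

lemma siteTerm_arc_cyclicShift {g : OddXGraph} {i j : ℕ} (h : IsArc g.ve i j) :
    g.siteTerm (.arc i j) = (-1 : ℝ) ^ (g.ve - 1) • (relabel (cyclicShift g.ve) g).siteTerm
      (.arc (cyclicShift g.ve i) (cyclicShift g.ve j)) := by
  simp only [siteTerm, siteSign, act]
  rcases h with ⟨hi, rfl⟩ | ⟨hve, rfl, rfl⟩
  · have hpow : (-1 : ℝ) ^ (g.ve - 1) = -(-1) ^ (g.ve - 1 - 1) := by
      rw [← Nat.sub_add_cancel (show 1 ≤ g.ve - 1 by omega), pow_succ, mul_neg_one,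
        Nat.add_sub_cancel]
    rw [contractArc_relabel (cyclicShift g.ve).injective (mergeMap_cyclicShift_succ hi),
      csign_cyclicShift_succ hi, hpow, neg_smul, neg_smul, smul_neg, neg_neg, smul_comm]
    exact congrArg _ (toDoX_cyclicShift (g.contractArc i (i + 1)))
  · rw [contractArc_relabel (f' := id) (cyclicShift g.ve).injective (mergeMap_cyclicShift_last hve),
      csign_cyclicShift_last hve, relabel_id, smul_smul, ← mul_assoc, ← pow_add,
      Even.neg_one_pow ⟨_, rfl⟩, one_mul]

lemma deltaX_cyclicShift (g : OddXGraph) :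
    g.deltaX = (-1 : ℝ) ^ (g.ve - 1) • (relabel (cyclicShift g.ve) g).deltaX := by
  refine g.isRelabelling_cyclicShift.deltaX_eq_smul fun _ s hs => ?_
  cases s with
  | edge e =>
    obtain ⟨he, hreg⟩ := edge_mem_sites.1 hs
    exact siteTerm_edge_cyclicShift he hreg
  | arc i j => exact siteTerm_arc_cyclicShift (arc_mem_sites.1 hs)
  | cross a =>
    exact siteTerm_cross_relabel (cross_mem_sites.1 hs) (toDoX_cyclicShift (g.deleteCrossAt a))

end OddXGraph

/-! ### Reversal of edges -/

namespace OEdge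

/-- The part of an edge which the reversal of its orientation does not change: the unordered pair
of its end-points and, unless it is a small loop, its half-edge-ordering bit. -/
noncomputable def skeleton (e : OEdge) : Sym2 ℕ × Bool :=
  (e.ends, if e.src = e.tgt then false else e.lp)

lemma ends_flipOEdgeX (e : OEdge) : (flipOEdgeX e).ends = e.ends := by
  unfold flipOEdgeX ends
  split_ifs
  · rfl
  · exact Sym2.eq_swap

lemma skeleton_flipOEdgeX (e : OEdge) : (flipOEdgeX e).skeleton = e.skeleton := by
  refine Prod.ext e.ends_flipOEdgeX ?_
  by_cases h : e.src = e.tgt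
  · simp [skeleton, flipOEdgeX, h]
  · simp [skeleton, flipOEdgeX, h, Ne.symm h]

lemma flipOEdgeX_flipOEdgeX (e : OEdge) : flipOEdgeX (flipOEdgeX e) = e := by
  obtain ⟨s, t, b⟩ := e
  by_cases h : s = t
  · simp [flipOEdgeX, h]
  · simp [flipOEdgeX, h, Ne.symm h]

lemma incidence_eq_of_ends_eq {e f : OEdge} (h : e.ends = f.ends) (v : ℕ) :
    incidence v e = incidence v f := by
  unfold incidence
  rcases ends_eq_iff.1 h with h | h <;> rw [h.1, h.2]
  rw [add_comm]

lemma src_eq_tgt_iff_of_ends_eq {e f : OEdge} (h : e.ends = f.ends) :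
    e.src = e.tgt ↔ f.src = f.tgt := by
  rcases ends_eq_iff.1 h with h | h <;> rw [h.1, h.2]
  exact eq_comm

lemma map_flipOEdgeX {f : ℕ → ℕ} {e : OEdge} (h : f e.src = f e.tgt → e.src = e.tgt) :
    (flipOEdgeX e).map f = flipOEdgeX (e.map f) := by
  by_cases hloop : e.src = e.tgt
  · simp [flipOEdgeX, map, hloop]
  · simp [flipOEdgeX, map, hloop, mt h hloop]

lemma contractArc_flipOEdgeX {i j : ℕ} (hij : i ≠ j) (e : OEdge) :
    (flipOEdgeX e).contractArc i j = flipOEdgeX (e.contractArc i j) := by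
  by_cases hchord : e.ends = s(i, j)
  · rcases Sym2.eq_iff.1 hchord with ⟨rfl, rfl⟩ | ⟨rfl, rfl⟩ <;>
      simp [flipOEdgeX, contractArc, hij, hij.symm]
  have hmap : ∀ f : OEdge, f.ends ≠ s(i, j) → f.contractArc i j = f.map (mergeMap i j) := by
    intro f hf
    rw [Ne, ends, Sym2.eq_iff, not_or] at hf
    rw [contractArc, if_neg hf.1, if_neg hf.2, map]
  rw [hmap _ hchord, hmap _ (by rwa [ends_flipOEdgeX]), map_flipOEdgeX fun hmerge => ?_]
  rw [ends, Sym2.eq_iff] at hchord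
  rw [mergeMap_eq_iff hij] at hmerge
  omega

end OEdge

namespace OddXGraph

/-- Two graphs which differ only in the orientations of edges, the half-edge orderings of small
loops and the labels of the crosses. -/
structure SameSkeleton (g g' : OddXGraph) : Prop where
  ve : g'.ve = g.ve
  vi : g'.vi = g.vi
  edges : g'.edges.map OEdge.skeleton = g.edges.map OEdge.skeleton
  mem_crosses_iff : ∀ c, c ∈ g'.crosses ↔ c ∈ g.crosses

namespace SameSkeleton

variable {g g' : OddXGraph}

lemma symm (h : SameSkeleton g g') : SameSkeleton g' g :=
  ⟨h.ve.symm, h.vi.symm, h.edges.symm, fun c => (h.mem_crosses_iff c).symm⟩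

lemma nv (h : SameSkeleton g g') : g'.nv = g.nv := by
  rw [OddXGraph.nv, h.ve, h.vi, OddXGraph.nv]

lemma exists_skeleton_eq (h : SameSkeleton g g') {e : OEdge} (he : e ∈ g.edges) :
    ∃ f ∈ g'.edges, f.skeleton = e.skeleton := by
  rw [← Multiset.mem_map, h.edges]
  exact Multiset.mem_map_of_mem _ he

lemma valence (h : SameSkeleton g g') (v : ℕ) : g'.valence v = g.valence v := by
  have hfactor : (OEdge.incidence v).FactorsThrough OEdge.skeleton := fun e f hef =>
    OEdge.incidence_eq_of_ends_eq (congrArg Prod.fst hef) v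
  have hsum : ∀ G : OddXGraph, G.valence v =
      ((G.edges.map OEdge.skeleton).map
        (Function.extend OEdge.skeleton (OEdge.incidence v) 0)).sum := fun G => by
    rw [Multiset.map_map, hfactor.extend_comp]
    rfl
  rw [hsum, hsum, h.edges]

lemma connected (h : SameSkeleton g g') (hg : g.Connected) : g'.Connected := by
  refine connected_of_map hg id (fun w hw => ⟨w, h.nv ▸ hw, rfl⟩) fun a b hab => Or.inr ?_
  refine hab.imp ?_ fun hext => by rwa [h.ve]
  rintro ⟨e, he, hab⟩
  obtain ⟨f, hf, hfe⟩ := h.exists_skeleton_eq he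
  refine ⟨f, hf, ?_⟩
  rcases OEdge.ends_eq_iff.1 (congrArg Prod.fst hfe) with hends | hends <;>
    rw [hends.1, hends.2]
  · exact hab
  · exact hab.symm.imp And.symm And.symm

lemma isValid (h : SameSkeleton g g') (hg : g.IsAdmissible) : g'.IsValid := by
  refine ⟨fun e he => ?_, fun e he hne => ?_, fun v hv hv' => ?_, fun v hv => ?_,
    fun c hc => ?_, h.connected hg.connected⟩
  · obtain ⟨f, hf, hfe⟩ := h.symm.exists_skeleton_eq he
    rw [h.nv]
    rcases OEdge.ends_eq_iff.1 (congrArg Prod.fst hfe) with hends | hends <;>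
      rw [← hends.1, ← hends.2]
    · exact ⟨hg.src_lt hf, hg.tgt_lt hf⟩
    · exact ⟨hg.tgt_lt hf, hg.src_lt hf⟩
  · obtain ⟨f, hf, hfe⟩ := h.symm.exists_skeleton_eq he
    have hfne := (OEdge.src_eq_tgt_iff_of_ends_eq (congrArg Prod.fst hfe)).not.2 hne
    have hlp := congrArg Prod.snd hfe
    simp only [OEdge.skeleton, if_neg hne, if_neg hfne] at hlp
    rw [← hlp, hg.lp_eq_false hf hfne]
  · rw [h.valence]
    exact hg.three_le_valence (h.ve ▸ hv) (h.nv ▸ hv')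
  · rw [h.valence, h.mem_crosses_iff]
    exact hg.one_le_valence_or_mem_crosses (h.ve ▸ hv)
  · rw [h.ve]
    exact hg.cross_lt ((h.mem_crosses_iff c).1 hc)

lemma isAdmissible (h : SameSkeleton g g') (hg : g.IsAdmissible) : g'.IsAdmissible := by
  refine ⟨h.isValid hg, ?_, ?_⟩
  · have hends := congrArg (Multiset.map Prod.fst) h.edges
    rw [Multiset.map_map, Multiset.map_map] at hends
    exact hends ▸ hg.nodup_ends
  · rintro ⟨e, he, hloop, hint⟩
    obtain ⟨f, hf, hfe⟩ := h.symm.exists_skeleton_eq he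
    have hfe := congrArg Prod.fst hfe
    have hlt := hg.src_lt_ve_of_loop hf ((OEdge.src_eq_tgt_iff_of_ends_eq hfe).2 hloop)
    rw [h.ve] at hint
    rcases OEdge.ends_eq_iff.1 hfe with hends | hends <;> omega

lemma isAdmissible_iff (h : SameSkeleton g g') : g.IsAdmissible ↔ g'.IsAdmissible :=
  ⟨h.isAdmissible, h.symm.isAdmissible⟩

end SameSkeleton

/-- The graph obtained by reversing one edge. -/
noncomputable def reverseEdge (e : OEdge) (g : OddXGraph) : OddXGraph where
  ve := g.ve
  vi := g.vi
  edges := flipOEdgeX e ::ₘ g.edges.erase e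
  crosses := g.crosses

/-- The action of the reversal of an edge on sites. -/
noncomputable def Site.reverseEdge (e : OEdge) : Site → Site
  | .edge f => .edge (if f = e then flipOEdgeX e else f)
  | s => s

section ReverseEdge

variable {g : OddXGraph} {e : OEdge}

lemma reverseEdge_reverseEdge (he : e ∈ g.edges) :
    reverseEdge (flipOEdgeX e) (reverseEdge e g) = g := by
  simp [reverseEdge, OEdge.flipOEdgeX_flipOEdgeX, Multiset.cons_erase he]

lemma sameSkeleton_reverseEdge (he : e ∈ g.edges) : SameSkeleton g (reverseEdge e g) where
  ve := rfl
  vi := rfl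
  edges := by
    rw [reverseEdge, Multiset.map_cons, OEdge.skeleton_flipOEdgeX, ← Multiset.map_cons,
      Multiset.cons_erase he]
  mem_crosses_iff _ := Iff.rfl

lemma degX_reverseEdge (he : e ∈ g.edges) : (reverseEdge e g).degX = g.degX := by
  unfold degX numEdges
  rw [reverseEdge, Multiset.card_cons, Multiset.card_erase_add_one he]
  rfl

lemma permVertexX_one_zero (n m v : ℕ) : permVertexX n m 1 0 v = v := by
  unfold permVertexX
  split_ifs with hext hint
  · exact Nat.mod_eq_of_lt hext
  · exact Nat.add_sub_cancel' (not_lt.1 hext)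
  · rfl

lemma permOEdgeX_one_zero (n m : ℕ) : permOEdgeX n m 1 0 = id :=
  funext fun e => by simp [permOEdgeX, permVertexX_one_zero]

lemma oddXRel_reverseEdge (he : e ∈ g.edges) : OddXRel g (reverseEdge e g) (-1) := by
  refine ⟨rfl, rfl, 1, 0, (e, true) ::ₘ (g.edges.erase e).map fun f => (f, false), rfl, 1,
    ?_, ?_, fun a => ?_, ?_⟩
  · simp [permOEdgeX_one_zero, Multiset.map_map, Multiset.cons_erase he]
  · simp [reverseEdge, Multiset.map_map]
  · simp [permVertexX_one_zero, reverseEdge]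
  · simp [Multiset.filter_map]

lemma toDoX_reverseEdge (he : e ∈ g.edges) :
    g.toDoX = (-1 : ℝ) • (reverseEdge e g).toDoX :=
  toDoX_eq_smul (oddXRel_reverseEdge he)

lemma Site.reverseEdge_mem_sites (he : e ∈ g.edges) {s : Site} (hs : s ∈ g.sites) :
    s.reverseEdge e ∈ (OddXGraph.reverseEdge e g).sites := by
  cases s with
  | edge f =>
    obtain ⟨hf, hreg⟩ := edge_mem_sites.1 hs
    refine edge_mem_sites.2 ?_
    change _ ∈ flipOEdgeX e ::ₘ g.edges.erase e ∧ g.isRegular _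
    split_ifs with hfe
    · subst hfe
      refine ⟨Multiset.mem_cons_self _ _, ?_⟩
      rw [flipOEdgeX, if_neg hreg.1]
      exact ⟨hreg.1.symm, fun h => hreg.2 h.symm⟩
    · exact ⟨Multiset.mem_cons_of_mem ((Multiset.mem_erase_of_ne hfe).2 hf), hreg⟩
  | arc i j =>
    have harc : IsArc g.ve i j := arc_mem_sites.1 hs
    exact arc_mem_sites.2 harc
  | cross a =>
    have ha : a < g.crosses.length := cross_mem_sites.1 hs
    exact cross_mem_sites.2 ha

lemma Site.reverseEdge_reverseEdge (hg : g.IsAdmissible) (he : e ∈ g.edges) {s : Site}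
    (hs : s ∈ g.sites) : (s.reverseEdge e).reverseEdge (flipOEdgeX e) = s := by
  cases s with
  | edge f =>
    simp only [Site.reverseEdge]
    by_cases hfe : f = e
    · simp [hfe, OEdge.flipOEdgeX_flipOEdgeX]
    · have hne : f ≠ flipOEdgeX e := fun h =>
        hfe (hg.eq_of_ends_eq (edge_mem_sites.1 hs).1 he (h ▸ e.ends_flipOEdgeX))
      simp [hfe, hne]
  | arc i j => rfl
  | cross a => rfl

lemma contractEdge_reverseEdge_self (hne : e.src ≠ e.tgt) :
    (reverseEdge e g).contractEdge (flipOEdgeX e) = g.contractEdge e := by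
  have hmerge : mergeMap e.tgt e.src = mergeMap e.src e.tgt := funext fun v => mergeMap_comm ..
  simp only [contractEdge, reverseEdge, Multiset.erase_cons_head, flipOEdgeX, if_neg hne, hmerge]

lemma contractEdge_reverseEdge_of_ne (hg : g.IsAdmissible) (he : e ∈ g.edges) {f : OEdge}
    (hf : f ∈ g.edges) (hne : f.src ≠ f.tgt) (hfe : f ≠ e) :
    (reverseEdge e g).contractEdge f =
      reverseEdge (e.map (mergeMap f.src f.tgt)) (g.contractEdge f) := by
  have hends : f.ends ≠ e.ends := fun h => hfe (hg.eq_of_ends_eq hf he h)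
  have hflip : flipOEdgeX e ≠ f := fun h => hends (h ▸ e.ends_flipOEdgeX)
  have hmap := Multiset.map_erase_of_mem (OEdge.map (mergeMap f.src f.tgt)) (g.edges.erase f)
    ((Multiset.mem_erase_of_ne (Ne.symm hfe)).2 he)
  have hmapflip : (flipOEdgeX e).map (mergeMap f.src f.tgt) =
      flipOEdgeX (e.map (mergeMap f.src f.tgt)) := by
    refine OEdge.map_flipOEdgeX fun hmerge => ?_
    rw [mergeMap_eq_iff hne] at hmerge
    rw [Ne, OEdge.ends_eq_iff] at hends
    omega
  simp only [contractEdge, reverseEdge, mk.injEq, true_and, and_true]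
  rw [Multiset.erase_cons_tail _ hflip, Multiset.map_cons, Multiset.erase_comm]
  exact congrArg₂ _ hmapflip hmap

lemma contractArc_reverseEdge (he : e ∈ g.edges) {i j : ℕ} (hij : i ≠ j) :
    (reverseEdge e g).contractArc i j = reverseEdge (e.contractArc i j) (g.contractArc i j) := by
  simp only [contractArc, reverseEdge, mk.injEq, true_and, and_true, Multiset.map_cons]
  exact congrArg₂ _ (OEdge.contractArc_flipOEdgeX hij e)
    (Multiset.map_erase_of_mem (OEdge.contractArc i j) _ he)

lemma deleteCrossAt_reverseEdge (he : e ∈ g.edges) (a : ℕ) :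
    (reverseEdge e g).deleteCrossAt a = reverseEdge e (g.deleteCrossAt a) := by
  simp only [deleteCrossAt, reverseEdge, mk.injEq, true_and, and_true]
  rw [Multiset.erase_cons_tail_of_mem he, Multiset.cons_swap]

lemma siteTerm_reverseEdge (hg : g.IsAdmissible) (he : e ∈ g.edges) {s : Site}
    (hs : s ∈ g.sites) :
    g.siteTerm s = (-1 : ℝ) • (reverseEdge e g).siteTerm (s.reverseEdge e) := by
  cases s with
  | edge f =>
    obtain ⟨hf, hne, -⟩ := edge_mem_sites.1 hs
    by_cases hfe : f = e
    · subst hfe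
      simp only [siteTerm, act, siteSign, Site.reverseEdge, if_true,
        contractEdge_reverseEdge_self hne]
      rw [flipOEdgeX, if_neg hne, csign_comm hne, smul_smul, neg_one_mul, neg_neg]
    · have hmem : e.map (mergeMap f.src f.tgt) ∈ (g.contractEdge f).edges :=
        mem_edges_contractEdge.2 ⟨e, (Multiset.mem_erase_of_ne (Ne.symm hfe)).2 he, rfl⟩
      simp only [siteTerm, act, siteSign, Site.reverseEdge, if_neg hfe,
        contractEdge_reverseEdge_of_ne hg he hf hne hfe]
      rw [toDoX_reverseEdge hmem, smul_comm]
  | arc i j =>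
    have hmem : e.contractArc i j ∈ (g.contractArc i j).edges :=
      mem_edges_contractArc.2 ⟨e, he, rfl⟩
    simp only [siteTerm, act, siteSign, Site.reverseEdge,
      contractArc_reverseEdge he (arc_mem_sites.1 hs).ne]
    rw [toDoX_reverseEdge hmem, smul_comm]
  | cross a =>
    have hmem : e ∈ (g.deleteCrossAt a).edges := Multiset.mem_cons_of_mem he
    simp only [siteTerm, act, siteSign, Site.reverseEdge, deleteCrossAt_reverseEdge he,
      degX_reverseEdge he]
    rw [toDoX_reverseEdge hmem, smul_comm]

lemma deltaX_reverseEdge (he : e ∈ g.edges) :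
    g.deltaX = (-1 : ℝ) • (reverseEdge e g).deltaX := by
  have he' : flipOEdgeX e ∈ (reverseEdge e g).edges := Multiset.mem_cons_self _ _
  have hsame := sameSkeleton_reverseEdge he
  refine deltaX_eq_smul_of_bij hsame.isAdmissible_iff (Site.reverseEdge e)
    (Site.reverseEdge (flipOEdgeX e)) (fun _ _ hs => Site.reverseEdge_mem_sites he hs)
    (fun _ s hs => ?_) (fun hg _ hs => Site.reverseEdge_reverseEdge hg he hs)
    (fun hg s hs => ?_) (fun hg _ hs => siteTerm_reverseEdge hg he hs)
  · have hmem := Site.reverseEdge_mem_sites he' hs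
    rwa [reverseEdge_reverseEdge he] at hmem
  · have hback := Site.reverseEdge_reverseEdge (hsame.isAdmissible hg) he' hs
    rwa [OEdge.flipOEdgeX_flipOEdgeX] at hback

end ReverseEdge

/-! ### Exchange of crosses -/

/-- `g'` is obtained from `g` by exchanging the crosses labelled `i` and `i + 1`. -/
structure IsCrossSwap (i : ℕ) (g g' : OddXGraph) : Prop where
  ve : g'.ve = g.ve
  vi : g'.vi = g.vi
  edges : g'.edges = g.edges
  length : g'.crosses.length = g.crosses.length
  lt : i + 1 < g.crosses.length
  getElem? : ∀ a, g'.crosses[Equiv.swap i (i + 1) a]? = g.crosses[a]?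

/-- The action of the exchange of the crosses labelled `i` and `i + 1` on sites. -/
def Site.swapCross (i : ℕ) : Site → Site
  | .cross a => .cross (Equiv.swap i (i + 1) a)
  | s => s

lemma Site.swapCross_swapCross (i : ℕ) (s : Site) : (s.swapCross i).swapCross i = s := by
  cases s <;> simp [Site.swapCross]

namespace IsCrossSwap

variable {i : ℕ} {g g' : OddXGraph}

lemma symm (h : IsCrossSwap i g g') : IsCrossSwap i g' g where
  ve := h.ve.symm
  vi := h.vi.symm
  edges := h.edges.symm
  length := h.length.symm
  lt := h.length ▸ h.lt
  getElem? a := by rw [← h.getElem?, Equiv.swap_apply_self]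

lemma sameSkeleton (h : IsCrossSwap i g g') : SameSkeleton g g' where
  ve := h.ve
  vi := h.vi
  edges := by rw [h.edges]
  mem_crosses_iff c := by
    rw [List.mem_iff_getElem?, List.mem_iff_getElem?, (Equiv.swap i (i + 1)).surjective.exists]
    simp only [h.getElem?]

lemma degX_eq (h : IsCrossSwap i g g') : g'.degX = g.degX := by
  simp [degX, numEdges, numCrosses, h.edges, h.ve, h.vi, h.length]

lemma oddXRel (h : IsCrossSwap i g g') : OddXRel g g' (-1) := by
  let x : Fin g.crosses.length := ⟨i, (Nat.lt_succ_self i).trans h.lt⟩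
  let y : Fin g.crosses.length := ⟨i + 1, h.lt⟩
  have hval : ∀ a, (Equiv.swap x y a : ℕ) = Equiv.swap i (i + 1) (a : ℕ) := fun a =>
    (Fin.valEmbedding.swap_apply x y a).symm
  refine ⟨h.ve, h.vi, 1, 0, g.edges.map fun e => (e, false), h.length, Equiv.swap x y,
    ?_, ?_, fun a => ?_, ?_⟩
  · simp [permOEdgeX_one_zero, Multiset.map_map]
  · simp [h.edges, Multiset.map_map]
  · have hget := h.getElem? a
    rw [← hval, List.getElem?_eq_getElem (by rw [h.length]; exact Fin.is_lt _),
      List.getElem?_eq_getElem a.is_lt] at hget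
    simpa only [permVertexX_one_zero, List.get_eq_getElem, Fin.val_cast] using Option.some.inj hget
  · have hxy : x ≠ y := Fin.ne_of_val_ne (Nat.succ_ne_self i).symm
    simp [Multiset.filter_map, Equiv.Perm.sign_swap hxy]

lemma toDoX_eq (h : IsCrossSwap i g g') : g.toDoX = (-1 : ℝ) • g'.toDoX :=
  toDoX_eq_smul h.oddXRel

lemma swapCross_mem_sites (h : IsCrossSwap i g g') {s : Site} (hs : s ∈ g.sites) :
    s.swapCross i ∈ g'.sites := by
  cases s with
  | edge e =>
    refine edge_mem_sites.2 ?_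
    rw [isRegular, h.edges, h.ve]
    exact edge_mem_sites.1 hs
  | arc i j =>
    refine arc_mem_sites.2 ?_
    rw [h.ve]
    exact arc_mem_sites.1 hs
  | cross a =>
    refine cross_mem_sites.2 ?_
    have ha := cross_mem_sites.1 hs
    rwa [← not_le, ← List.getElem?_eq_none_iff, h.getElem?, List.getElem?_eq_none_iff, not_le]

lemma contractEdge (h : IsCrossSwap i g g') (e : OEdge) :
    IsCrossSwap i (g.contractEdge e) (g'.contractEdge e) where
  ve := h.ve
  vi := congrArg (· - 1) h.vi
  edges := by simp only [OddXGraph.contractEdge, h.edges]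
  length := by simp [OddXGraph.contractEdge, h.length]
  lt := by simpa [OddXGraph.contractEdge] using h.lt
  getElem? a := by simp [OddXGraph.contractEdge, h.getElem?]

lemma contractArc (h : IsCrossSwap i g g') (j k : ℕ) :
    IsCrossSwap i (g.contractArc j k) (g'.contractArc j k) where
  ve := congrArg (· - 1) h.ve
  vi := h.vi
  edges := by simp only [OddXGraph.contractArc, h.edges]
  length := by simp [OddXGraph.contractArc, h.length]
  lt := by simpa [OddXGraph.contractArc] using h.lt
  getElem? a := by simp [OddXGraph.contractArc, h.getElem?]

lemma edges_deleteCrossAt (h : IsCrossSwap i g g') (a : ℕ) :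
    (g'.deleteCrossAt (Equiv.swap i (i + 1) a)).edges = (g.deleteCrossAt a).edges := by
  simp only [deleteCrossAt, h.edges, h.getElem?]

lemma deleteCrossAt_of_mem (h : IsCrossSwap i g g') {a : ℕ} (ha : a = i ∨ a = i + 1) :
    g'.deleteCrossAt (Equiv.swap i (i + 1) a) = g.deleteCrossAt a := by
  have hcrosses : (g'.deleteCrossAt (Equiv.swap i (i + 1) a)).crosses =
      (g.deleteCrossAt a).crosses := by
    refine List.ext_getElem? fun b => ?_
    simp only [deleteCrossAt, List.getElem?_eraseIdx, ← h.symm.getElem?, Equiv.swap_apply_def]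
    split_ifs <;> first | omega | rfl | (congr 1; omega)
  have hedges := h.edges_deleteCrossAt a
  simp only [deleteCrossAt, mk.injEq] at hedges hcrosses ⊢
  exact ⟨h.ve, h.vi, hedges, hcrosses⟩

lemma deleteCrossAt_of_ne (h : IsCrossSwap i g g') {a : ℕ} (ha : a < g.crosses.length)
    (hai : a ≠ i) (hai' : a ≠ i + 1) :
    IsCrossSwap (if a < i then i - 1 else i) (g.deleteCrossAt a) (g'.deleteCrossAt a) where
  ve := h.ve
  vi := h.vi
  edges := by
    have hedges := h.edges_deleteCrossAt a
    rwa [Equiv.swap_apply_of_ne_of_ne hai hai'] at hedges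
  length := by simp [deleteCrossAt, List.length_eraseIdx, h.length]
  lt := by
    have hlt := h.lt
    simp only [deleteCrossAt, List.length_eraseIdx, if_pos ha]
    split_ifs <;> omega
  getElem? b := by
    simp only [deleteCrossAt, List.getElem?_eraseIdx, ← h.symm.getElem?, Equiv.swap_apply_def]
    split_ifs <;> first | omega | rfl | (congr 1; omega)

lemma siteTerm_cross (h : IsCrossSwap i g g') {a : ℕ} (ha : a < g.crosses.length) :
    g.siteTerm (.cross a) = (-1 : ℝ) • g'.siteTerm (.cross (Equiv.swap i (i + 1) a)) := by
  simp only [siteTerm, act, siteSign, h.degX_eq]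
  by_cases hai : a = i ∨ a = i + 1
  · rw [h.deleteCrossAt_of_mem hai, smul_smul]
    congr 1
    rcases hai with rfl | rfl
    · rw [Equiv.swap_apply_left, Nat.cast_succ, ← add_assoc, zpow_add_one₀ (by norm_num) (_ + 1)]
      ring
    · rw [Equiv.swap_apply_right, Nat.cast_succ, ← add_assoc, zpow_add_one₀ (by norm_num) (_ + 1)]
      ring
  · rw [not_or] at hai
    rw [Equiv.swap_apply_of_ne_of_ne hai.1 hai.2, (h.deleteCrossAt_of_ne ha hai.1 hai.2).toDoX_eq,
      smul_comm]

lemma siteTerm_eq (h : IsCrossSwap i g g') {s : Site} (hs : s ∈ g.sites) :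
    g.siteTerm s = (-1 : ℝ) • g'.siteTerm (s.swapCross i) := by
  cases s with
  | edge e =>
    simp only [siteTerm, act, siteSign, Site.swapCross]
    rw [(h.contractEdge e).toDoX_eq, smul_comm]
  | arc j k =>
    simp only [siteTerm, act, siteSign, Site.swapCross]
    rw [(h.contractArc j k).toDoX_eq, smul_comm]
  | cross a => exact h.siteTerm_cross (cross_mem_sites.1 hs)

lemma deltaX_eq (h : IsCrossSwap i g g') : g.deltaX = (-1 : ℝ) • g'.deltaX :=
  deltaX_eq_smul_of_bij h.sameSkeleton.isAdmissible_iff (Site.swapCross i) (Site.swapCross i)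
    (fun _ _ hs => h.swapCross_mem_sites hs) (fun _ _ hs => h.symm.swapCross_mem_sites hs)
    (fun _ s _ => s.swapCross_swapCross i) (fun _ s _ => s.swapCross_swapCross i)
    fun _ _ hs => h.siteTerm_eq hs

end IsCrossSwap

end OddXGraph

/-! ### Compatibility with all sign relations -/

lemma perm_induction_adjacent {n : ℕ} {P : Equiv.Perm (Fin n) → Prop} (one : P 1)
    (swap : ∀ i j : Fin n, (j : ℕ) = i + 1 → P (Equiv.swap i j))
    (mul : ∀ π σ, P π → P σ → P (π * σ)) (π : Equiv.Perm (Fin n)) : P π := by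
  rcases n with _ | n
  · rwa [Subsingleton.elim π 1]
  · have hπ : π ∈ Submonoid.closure (Set.range fun i : Fin n => Equiv.swap i.castSucc i.succ) := by
      rw [Equiv.Perm.mclosure_swap_castSucc_succ]
      exact Submonoid.mem_top π
    induction hπ using Submonoid.closure_induction with
    | mem π h =>
      obtain ⟨i, rfl⟩ := h
      exact swap _ _ rfl
    | one => exact one
    | mul π σ _ _ hπ hσ => exact mul π σ hπ hσ

lemma permVertexX_mul (n m : ℕ) (π σ : Equiv.Perm (Fin m)) :
    permVertexX n m (π * σ) 0 = permVertexX n m π 0 ∘ permVertexX n m σ 0 := by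
  funext v
  by_cases hext : v < n
  · simp [permVertexX, hext, Nat.mod_eq_of_lt]
  · by_cases hint : v - n < m <;> simp [permVertexX, hext, hint]

lemma permVertexX_succ (n m : ℕ) (π : Equiv.Perm (Fin m)) (r : ℕ) :
    permVertexX n m π (r + 1) = cyclicShift n ∘ permVertexX n m π r := by
  funext v
  rw [Function.comp_apply, cyclicShift_apply]
  by_cases hext : v < n
  · have hlt := Nat.mod_lt (v + r) (Nat.zero_lt_of_lt hext)
    simp only [permVertexX, if_pos hext]
    rw [← add_assoc, ← Nat.mod_add_mod]
    split_ifs with hlt' hlast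
    · exact Nat.mod_eq_of_lt hlt'
    · rw [hlast, Nat.mod_self]
    · omega
  · simp only [permVertexX, if_neg hext]
    split_ifs <;> omega

namespace OddXGraph

lemma deltaX_permVertexX_zero {m : ℕ} (π : Equiv.Perm (Fin m)) :
    ∀ g : OddXGraph, g.vi = m →
      g.deltaX = ((Equiv.Perm.sign π : ℤ) : ℝ) • (relabel (permVertexX g.ve m π 0) g).deltaX := by
  induction π using perm_induction_adjacent with
  | one =>
    intro g _
    have hid : permVertexX g.ve m 1 0 = id := funext (permVertexX_one_zero g.ve m)
    simp [hid, relabel_id]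
  | swap i j hij =>
    intro g hg
    have hne : i ≠ j := fun h => by simp [h] at hij
    have := j.is_lt
    rw [funext (permVertexX_swap i j), hij, ← add_assoc, Equiv.Perm.sign_swap hne]
    rw [deltaX_swap (k := g.ve + i) (by omega) (by unfold nv; omega)]
    simp
  | mul π σ hπ hσ =>
    intro g hg
    rw [hσ g hg, hπ (relabel _ g) hg, relabel_relabel, smul_smul, permVertexX_mul,
      Equiv.Perm.sign_mul, Units.val_mul, Int.cast_mul, mul_comm]
    rfl

lemma deltaX_permVertexX (g : OddXGraph) (π : Equiv.Perm (Fin g.vi)) (r : ℕ) :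
    g.deltaX =
      (((Equiv.Perm.sign π : ℤ) : ℝ) * ((Equiv.Perm.sign (finRotate g.ve ^ r) : ℤ) : ℝ)) •
        (relabel (permVertexX g.ve g.vi π r) g).deltaX := by
  induction r with
  | zero => simpa using deltaX_permVertexX_zero π g rfl
  | succ r ih =>
    have hshift := deltaX_cyclicShift (relabel (permVertexX g.ve g.vi π r) g)
    change _ = (-1 : ℝ) ^ (g.ve - 1) • (relabel (cyclicShift g.ve) _).deltaX at hshift
    rw [ih, hshift, relabel_relabel, ← permVertexX_succ, smul_smul, ←
      sign_finRotate_eq_neg_one_pow, mul_assoc, pow_succ, Equiv.Perm.sign_mul, Units.val_mul,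
      Int.cast_mul]

lemma deltaX_reverseEdges (n m : ℕ) (c : List ℕ) (F : Multiset (OEdge × Bool)) :
    ∀ E : Multiset OEdge,
      deltaX ⟨n, m, F.map Prod.fst + E, c⟩ =
        (-1 : ℝ) ^ Multiset.card (F.filter fun p => p.2 = true) •
          deltaX ⟨n, m, (F.map fun p => if p.2 then flipOEdgeX p.1 else p.1) + E, c⟩ := by
  induction F using Multiset.induction_on with
  | empty => simp
  | cons p F ih =>
    intro E
    obtain ⟨e, _ | _⟩ := p
    · simpa using ih (e ::ₘ E)
    · have hreverse := deltaX_reverseEdge (g := ⟨n, m, e ::ₘ (F.map Prod.fst + E), c⟩)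
        (Multiset.mem_cons_self e _)
      have hrest := ih (flipOEdgeX e ::ₘ E)
      simp only [reverseEdge, Multiset.erase_cons_head] at hreverse
      rw [Multiset.add_cons] at hrest
      rw [Multiset.map_cons, Multiset.cons_add, hreverse, hrest]
      simp [pow_succ]

lemma deltaX_permCrosses (n m : ℕ) (E : Multiset OEdge) {x : ℕ} (ρ : Equiv.Perm (Fin x)) :
    ∀ c : Fin x → ℕ, deltaX ⟨n, m, E, List.ofFn (c ∘ ρ)⟩ =
      ((Equiv.Perm.sign ρ : ℤ) : ℝ) • deltaX ⟨n, m, E, List.ofFn c⟩ := by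
  induction ρ using perm_induction_adjacent with
  | one => simp
  | swap i j hij =>
    intro c
    have hne : i ≠ j := fun h => by simp [h] at hij
    have hval : ∀ a, (Equiv.swap i j a : ℕ) = Equiv.swap (i : ℕ) (i + 1) a := fun a => by
      rw [← hij]
      exact (Fin.valEmbedding.swap_apply i j a).symm
    have hswap : IsCrossSwap i ⟨n, m, E, List.ofFn (c ∘ Equiv.swap i j)⟩
        ⟨n, m, E, List.ofFn c⟩ := by
      refine ⟨rfl, rfl, rfl, by simp, by simp [← hij], fun a => ?_⟩
      rcases lt_or_ge a x with ha | ha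
      · lift a to Fin x using ha
        rw [← hval]
        simp
      · have := j.is_lt
        rw [Equiv.swap_apply_of_ne_of_ne (by omega) (by omega)]
        simp [ha]
    rw [hswap.deltaX_eq, Equiv.Perm.sign_swap hne]
    simp
  | mul π σ hπ hσ =>
    intro c
    rw [Equiv.Perm.coe_mul, ← Function.comp_assoc, hσ, hπ, smul_smul, Equiv.Perm.sign_mul,
      Units.val_mul, Int.cast_mul, mul_comm]

lemma deltaX_eq_smul {g g' : OddXGraph} {ε : ℝ} (h : OddXRel g g' ε) :
    g.deltaX = ε • g'.deltaX := by
  obtain ⟨n, m, E, l⟩ := g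
  obtain ⟨n', m', E', l'⟩ := g'
  obtain ⟨hve, hvi, π, r, F, hlength, ρ, hfst, hedges, hcrosses, rfl⟩ := h
  dsimp only at hve hvi hlength hedges
  subst hve hvi hedges
  let c : Fin l.length → ℕ := fun a => l'.get (Fin.cast hlength.symm a)
  have hl' : l' = List.ofFn c := List.ext_getElem (by simp [hlength]) (by simp [c])
  have hl : l.map (permVertexX n' m' π r) = List.ofFn (c ∘ ρ) :=
    List.ext_getElem (by simp) fun a ha _ => by
      simpa [c] using (hcrosses ⟨a, by simpa using ha⟩).symm
  have hrelabel : relabel (permVertexX n' m' π r) ⟨n', m', E, l⟩ =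
      ⟨n', m', F.map Prod.fst + 0, List.ofFn (c ∘ ρ)⟩ := by
    rw [add_zero, hfst, ← hl]
    rfl
  rw [deltaX_permVertexX _ π r, hrelabel, deltaX_reverseEdges, add_zero, deltaX_permCrosses,
    ← hl', smul_smul, smul_smul]

end OddXGraph

/-! ### Residuals of sites -/

lemma sum_sum_eq_zero_of_antisymm {ι M : Type*} [AddCommGroup M] [IsAddTorsionFree M]
    {S : Finset ι} {W : ι → ι → M} (P : ι → ι → Prop)
    (hanti : ∀ s ∈ S, ∀ t ∈ S, ¬P s t → ¬P t s → W s t = -W t s)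
    (hzero : ∀ s ∈ S, ∀ t ∈ S, P s t → W t s = 0)
    (hsum : ∀ t ∈ S, ∑ s ∈ S with P s t, W s t = 0) :
    ∑ s ∈ S, ∑ t ∈ S, W s t = 0 := by
  set A : ι → ι → M := fun s t => if P s t ∨ P t s then 0 else W s t with hA
  have hsplit : ∀ s ∈ S, ∀ t ∈ S, W s t = A s t + if P s t then W s t else 0 := by
    intro s hs t ht
    by_cases hst : P s t
    · simp [hA, hst]
    · by_cases hts : P t s
      · simp [hA, hst, hts, hzero t ht s hs hts]
      · simp [hA, hst, hts]
  have hAneg : ∀ s ∈ S, ∀ t ∈ S, A s t = -A t s := by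
    intro s hs t ht
    by_cases hst : P s t
    · simp [hA, hst]
    · by_cases hts : P t s
      · simp [hA, hts]
      · simpa [hA, hst, hts] using hanti s hs t ht hst hts
  have hAsum : ∑ s ∈ S, ∑ t ∈ S, A s t = 0 := by
    refine self_eq_neg.1 ?_
    calc ∑ s ∈ S, ∑ t ∈ S, A s t = ∑ s ∈ S, ∑ t ∈ S, -A t s :=
          Finset.sum_congr rfl fun s hs => Finset.sum_congr rfl fun t ht => hAneg s hs t ht
      _ = -∑ s ∈ S, ∑ t ∈ S, A s t := by
          simp only [Finset.sum_neg_distrib]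
          rw [Finset.sum_comm]
  rw [Finset.sum_congr rfl fun s hs => Finset.sum_congr rfl (hsplit s hs)]
  simp only [Finset.sum_add_distrib]
  rw [hAsum, zero_add, Finset.sum_comm]
  exact Finset.sum_eq_zero fun t ht => (Finset.sum_filter _ _).symm.trans (hsum t ht)

namespace OddXGraph

lemma degX_act_and_ordX_act {g : OddXGraph} (hg : g.IsAdmissible) {s : Site} (hs : s ∈ g.sites) :
    (g.act s).degX = g.degX + 1 ∧ (g.act s).ordX = g.ordX := by
  cases s with
  | edge e =>
    obtain ⟨he, hreg⟩ := edge_mem_sites.1 hs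
    have hvi := hg.vi_pos he hreg
    have hcard := Multiset.card_erase_add_one he
    simp only [act, contractEdge, degX, ordX, numEdges, numCrosses, Multiset.card_map,
      List.length_map]
    omega
  | arc i j =>
    have hi : i < g.ve := (arc_mem_sites.1 hs).left_lt
    have hve : ((g.ve - 1 : ℕ) : ℤ) = g.ve - 1 := by omega
    simp only [act, contractArc, degX, ordX, numEdges, numCrosses, Multiset.card_map,
      List.length_map, hve, and_true]
    ring
  | cross a =>
    have ha := cross_mem_sites.1 hs
    simp only [act, deleteCrossAt, degX, ordX, numEdges, numCrosses, Multiset.card_cons,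
      List.length_eraseIdx_of_lt ha]
    omega

lemma IsArc.mergeMap_left_of_not_chord {n i j k l : ℕ} (h : ¬(i < n ∧ j < n))
    (hkl : IsArc n k l) : mergeMap i j k = k :=
  mergeMap_eq_self_of_lt (by have := hkl.left_lt; omega)

lemma IsArc.mergeMap_right_of_not_chord {n i j k l : ℕ} (h : ¬(i < n ∧ j < n))
    (hkl : IsArc n k l) : mergeMap i j l = l :=
  mergeMap_eq_self_of_lt (by have := hkl.right_lt; omega)

lemma isArc_mergeMap {n i j k l : ℕ} (hij : IsArc n i j) (hkl : IsArc n k l)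
    (h : mergeMap i j k ≠ mergeMap i j l) : IsArc (n - 1) (mergeMap i j k) (mergeMap i j l) := by
  rw [Ne, mergeMap_eq_iff hij.ne] at h
  unfold IsArc at *
  unfold mergeMap
  split_ifs <;> omega

lemma isArc_eq_of_mergeMap_eq {n i j k l k' l' : ℕ} (hij : IsArc n i j) (hkl : IsArc n k l)
    (hkl' : IsArc n k' l') (h : mergeMap i j k ≠ mergeMap i j l)
    (h' : mergeMap i j k' ≠ mergeMap i j l') (hk : mergeMap i j k = mergeMap i j k')
    (hl : mergeMap i j l = mergeMap i j l') : k = k' ∧ l = l' := by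
  rw [Ne, mergeMap_eq_iff hij.ne] at h h'
  rw [mergeMap_eq_iff hij.ne] at hk hl
  unfold IsArc at hij hkl hkl'
  omega

lemma exists_isArc_mergeMap_eq {n i j a b : ℕ} (hij : IsArc n i j) (hab : IsArc (n - 1) a b) :
    ∃ k l, IsArc n k l ∧ mergeMap i j k = a ∧ mergeMap i j l = b := by
  unfold IsArc at *
  by_cases hb : b = 0
  · by_cases hj : j = 0
    · refine ⟨n - 2, n - 1, by omega, ?_, ?_⟩ <;> unfold mergeMap <;> split_ifs <;> omega
    · refine ⟨n - 1, 0, by omega, ?_, ?_⟩ <;> unfold mergeMap <;> split_ifs <;> omega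
  · by_cases ha : j = 0 ∨ a < i
    · refine ⟨a, b, by omega, ?_, ?_⟩ <;> unfold mergeMap <;> split_ifs <;> omega
    · refine ⟨a + 1, b + 1, by omega, ?_, ?_⟩ <;> unfold mergeMap <;> split_ifs <;> omega

/-- The site of `g.act s` which corresponds to the site `t` of `g`. -/
def Site.residual : Site → Site → Site
  | .edge e, t => t.map (mergeMap e.src e.tgt)
  | .arc i j, .edge f => .edge (f.contractArc i j)
  | .arc i j, .arc k l => .arc (mergeMap i j k) (mergeMap i j l)
  | .cross a, .cross b => .cross (if b < a then b else b - 1)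
  | _, t => t

/-- The action at the site `s` does not destroy the site `t`. -/
def Survives (g : OddXGraph) : Site → Site → Prop
  | .edge e, .edge f => e ≠ f ∧ ¬(mergeMap e.src e.tgt f.src < g.ve ∧
      mergeMap e.src e.tgt f.tgt < g.ve)
  | .arc i j, .arc k l => mergeMap i j k ≠ mergeMap i j l
  | .cross a, .cross b => a ≠ b
  | _, _ => True

section Residual

variable {g : OddXGraph}

lemma not_chord_contractArc {i j : ℕ} (hij : IsArc g.ve i j) {f : OEdge} :
    ((f.contractArc i j).src < g.ve - 1 ∧ (f.contractArc i j).tgt < g.ve - 1) ↔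
      f.src < g.ve ∧ f.tgt < g.ve := by
  rw [OEdge.contractArc_src, OEdge.contractArc_tgt,
    mergeMap_lt_iff_of_lt hij.ne hij.left_lt hij.right_lt,
    mergeMap_lt_iff_of_lt hij.ne hij.left_lt hij.right_lt]

lemma isRegular_contractArc {i j : ℕ} (hij : IsArc g.ve i j) {f : OEdge} (hf : g.isRegular f) :
    (g.contractArc i j).isRegular (f.contractArc i j) := by
  refine ⟨fun h => ?_, fun h => hf.2 ((not_chord_contractArc hij).1 h)⟩
  rw [OEdge.contractArc_src, OEdge.contractArc_tgt, mergeMap_eq_iff hij.ne] at h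
  obtain ⟨hne, hext⟩ := hf
  have hi := hij.left_lt
  have hj := hij.right_lt
  omega

lemma residual_mem_sites (hg : g.IsAdmissible) {s t : Site} (hs : s ∈ g.sites) (ht : t ∈ g.sites)
    (hst : g.Survives s t) : s.residual t ∈ (g.act s).sites := by
  rcases s with e | ⟨i, j⟩ | a <;> rcases t with f | ⟨k, l⟩ | b
  · obtain ⟨he, hreg⟩ := edge_mem_sites.1 hs
    obtain ⟨hf, hfreg⟩ := edge_mem_sites.1 ht
    refine edge_mem_sites.2 ⟨mem_edges_contractEdge.2
      ⟨f, (Multiset.mem_erase_of_ne hst.1.symm).2 hf, rfl⟩, fun h => ?_, hst.2⟩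
    refine hst.1 (hg.eq_of_ends_eq he hf (OEdge.ends_eq_iff.2 ?_))
    have := (mergeMap_eq_iff hreg.1 _ _).1 h
    have := hfreg.1
    omega
  · have hkl := arc_mem_sites.1 ht
    have hchord := (edge_mem_sites.1 hs).2.2
    simp only [Site.residual, Site.map, hkl.mergeMap_left_of_not_chord hchord,
      hkl.mergeMap_right_of_not_chord hchord]
    exact arc_mem_sites.2 hkl
  · exact cross_mem_sites.2 ((cross_mem_sites.1 ht).trans_eq (List.length_map _).symm)
  · obtain ⟨hf, hfreg⟩ := edge_mem_sites.1 ht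
    exact edge_mem_sites.2 ⟨mem_edges_contractArc.2 ⟨f, hf, rfl⟩,
      isRegular_contractArc (arc_mem_sites.1 hs) hfreg⟩
  · exact arc_mem_sites.2 (isArc_mergeMap (arc_mem_sites.1 hs) (arc_mem_sites.1 ht) hst)
  · exact cross_mem_sites.2 ((cross_mem_sites.1 ht).trans_eq (List.length_map _).symm)
  · obtain ⟨hf, hfreg⟩ := edge_mem_sites.1 ht
    exact edge_mem_sites.2 ⟨Multiset.mem_cons_of_mem hf, hfreg⟩
  · have hkl : IsArc g.ve k l := arc_mem_sites.1 ht
    exact arc_mem_sites.2 hkl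
  · have ha := cross_mem_sites.1 hs
    have hb := cross_mem_sites.1 ht
    have hab : a ≠ b := hst
    refine cross_mem_sites.2 ?_
    change _ < (g.crosses.eraseIdx a).length
    rw [List.length_eraseIdx_of_lt ha]
    split_ifs <;> omega

lemma residual_injOn {s : Site} (hs : s ∈ g.sites) (hN : (g.act s).IsAdmissible) :
    Set.InjOn s.residual {t | t ∈ g.sites ∧ g.Survives s t} := by
  rintro t ⟨ht, hst⟩ u ⟨hu, hsu⟩ h
  rcases s with e | ⟨i, j⟩ | a <;> rcases t with f | ⟨k, l⟩ | b <;>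
    rcases u with f' | ⟨k', l'⟩ | b' <;>
    simp only [Site.residual, Site.map, Site.edge.injEq, Site.arc.injEq, Site.cross.injEq,
      reduceCtorEq] at h
  · have hf := (Multiset.mem_erase_of_ne hst.1.symm).2 (edge_mem_sites.1 ht).1
    have hf' := (Multiset.mem_erase_of_ne hsu.1.symm).2 (edge_mem_sites.1 hu).1
    exact congrArg _ (Multiset.inj_on_of_nodup_map hN.nodup f hf f' hf' h)
  · have hchord := (edge_mem_sites.1 hs).2.2
    rw [(arc_mem_sites.1 ht).mergeMap_left_of_not_chord hchord,
      (arc_mem_sites.1 ht).mergeMap_right_of_not_chord hchord,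
      (arc_mem_sites.1 hu).mergeMap_left_of_not_chord hchord,
      (arc_mem_sites.1 hu).mergeMap_right_of_not_chord hchord] at h
    rw [h.1, h.2]
  · rw [h]
  · exact congrArg _ (Multiset.inj_on_of_nodup_map hN.nodup f (edge_mem_sites.1 ht).1 f'
      (edge_mem_sites.1 hu).1 h)
  · obtain ⟨rfl, rfl⟩ := isArc_eq_of_mergeMap_eq (arc_mem_sites.1 hs) (arc_mem_sites.1 ht)
      (arc_mem_sites.1 hu) hst hsu h.1 h.2
    rfl
  · rw [h]
  · rw [h]
  · rw [h.1, h.2]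
  · have hab : a ≠ b := hst
    have hab' : a ≠ b' := hsu
    congr 1
    split_ifs at h <;> omega

lemma exists_residual_eq_of_edge (hg : g.IsAdmissible) {e : OEdge} (he : Site.edge e ∈ g.sites)
    {u : Site} (hu : u ∈ (g.act (.edge e)).sites) :
    ∃ t ∈ g.sites, g.Survives (.edge e) t ∧ (Site.edge e).residual t = u := by
  have hchord := (edge_mem_sites.1 he).2.2
  rcases u with f | ⟨k, l⟩ | b
  · obtain ⟨hf, hne, hext⟩ := edge_mem_sites.1 hu
    obtain ⟨f₀, hf₀, rfl⟩ := mem_edges_contractEdge.1 hf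
    refine ⟨.edge f₀, edge_mem_sites.2 ⟨Multiset.mem_of_mem_erase hf₀,
      fun h => hne (congrArg (mergeMap e.src e.tgt) h), fun h => hext ?_⟩, ⟨?_, hext⟩, rfl⟩
    · exact ⟨(mergeMap_le _ _ _).trans_lt h.1, (mergeMap_le _ _ _).trans_lt h.2⟩
    · rintro rfl
      exact hg.nodup.notMem_erase hf₀
  · have hkl : IsArc g.ve k l := (arc_mem_sites (g := g.contractEdge e)).1 hu
    refine ⟨.arc k l, arc_mem_sites.2 hkl, trivial, ?_⟩
    simp only [Site.residual, Site.map, hkl.mergeMap_left_of_not_chord hchord,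
      hkl.mergeMap_right_of_not_chord hchord]
  · exact ⟨.cross b, cross_mem_sites.2 ((cross_mem_sites.1 hu).trans_eq (List.length_map _)),
      trivial, rfl⟩

lemma exists_residual_eq_of_arc {i j : ℕ} (hij : Site.arc i j ∈ g.sites) {u : Site}
    (hu : u ∈ (g.act (.arc i j)).sites) :
    ∃ t ∈ g.sites, g.Survives (.arc i j) t ∧ (Site.arc i j).residual t = u := by
  have hij := arc_mem_sites.1 hij
  rcases u with f | ⟨k, l⟩ | b
  · obtain ⟨hf, hne, hext⟩ := edge_mem_sites.1 hu
    obtain ⟨f₀, hf₀, rfl⟩ := mem_edges_contractArc.1 hf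
    refine ⟨.edge f₀, edge_mem_sites.2 ⟨hf₀, fun h => hne ?_,
      fun h => hext ((not_chord_contractArc hij).2 h)⟩, trivial, rfl⟩
    rw [OEdge.contractArc_src, OEdge.contractArc_tgt, h]
  · have hkl : IsArc (g.ve - 1) k l := arc_mem_sites.1 hu
    obtain ⟨k₀, l₀, h₀, rfl, rfl⟩ := exists_isArc_mergeMap_eq hij hkl
    exact ⟨.arc k₀ l₀, arc_mem_sites.2 h₀, hkl.ne, rfl⟩
  · exact ⟨.cross b, cross_mem_sites.2 ((cross_mem_sites.1 hu).trans_eq (List.length_map _)),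
      trivial, rfl⟩

lemma exists_residual_eq_of_cross {a : ℕ} (ha : Site.cross a ∈ g.sites) {u : Site}
    (hu : u ∈ (g.act (.cross a)).sites) :
    ∃ t ∈ g.sites, g.Survives (.cross a) t ∧ (Site.cross a).residual t = u := by
  have ha := cross_mem_sites.1 ha
  rcases u with f | ⟨k, l⟩ | b
  · obtain ⟨hf, hreg⟩ := edge_mem_sites.1 hu
    refine ⟨.edge f, edge_mem_sites.2 ⟨?_, hreg⟩, trivial, rfl⟩
    rcases Multiset.mem_cons.1 hf with rfl | hf
    · exact absurd rfl hreg.1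
    · exact hf
  · have hkl : IsArc g.ve k l := (arc_mem_sites (g := g.deleteCrossAt a)).1 hu
    exact ⟨.arc k l, arc_mem_sites.2 hkl, trivial, rfl⟩
  · have hb : b < (g.crosses.eraseIdx a).length := cross_mem_sites.1 hu
    rw [List.length_eraseIdx_of_lt ha] at hb
    refine ⟨.cross (if b < a then b else b + 1), cross_mem_sites.2 ?_, ?_, ?_⟩
    · split_ifs <;> omega
    · change a ≠ _
      split_ifs <;> omega
    · simp only [Site.residual, Site.cross.injEq]
      split_ifs <;> omega

lemma exists_residual_eq (hg : g.IsAdmissible) {s u : Site} (hs : s ∈ g.sites)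
    (hu : u ∈ (g.act s).sites) : ∃ t ∈ g.sites, g.Survives s t ∧ s.residual t = u := by
  cases s with
  | edge e => exact exists_residual_eq_of_edge hg hs hu
  | arc i j => exact exists_residual_eq_of_arc hs hu
  | cross a => exact exists_residual_eq_of_cross hs hu

/-- The graph obtained by acting at `s` and then at the residual of `t`. -/
def act₂ (g : OddXGraph) (s t : Site) : OddXGraph := (g.act s).act (s.residual t)

/-- The sign of the successive actions at `s` and at the residual of `t`. -/
noncomputable def sign₂ (g : OddXGraph) (s t : Site) : ℝ :=
  g.siteSign s * (g.act s).siteSign (s.residual t)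

/-- The contribution to `δ̃ (δ̃ g)` of the successive actions at `s` and at the residual of `t`. -/
noncomputable def siteTerm₂ (g : OddXGraph) (s t : Site) : DoX :=
  if (g.act s).IsAdmissible ∧ g.Survives s t then g.sign₂ s t • (g.act₂ s t).toDoX else 0

lemma siteSign_smul_deltaX_act (hg : g.IsAdmissible) {s : Site} (hs : s ∈ g.sites) :
    g.siteSign s • (g.act s).deltaX = ∑ t ∈ g.sites, g.siteTerm₂ s t := by
  by_cases hN : (g.act s).IsAdmissible
  · simp only [siteTerm₂, hN, true_and]
    rw [deltaX_eq_sum hN, Finset.smul_sum, ← Finset.sum_filter]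
    symm
    refine Finset.sum_bij (fun t _ => s.residual t) (fun t ht => ?_) (fun t ht u hu h => ?_)
      (fun u hu => ?_) fun t _ => mul_smul _ _ _
    · rw [Finset.mem_filter] at ht
      exact residual_mem_sites hg hs ht.1 ht.2
    · exact residual_injOn hs hN (Finset.mem_filter.1 ht) (Finset.mem_filter.1 hu) h
    · obtain ⟨t, ht, hst, rfl⟩ := exists_residual_eq hg hs hu
      exact ⟨t, Finset.mem_filter.2 ⟨ht, hst⟩, rfl⟩
  · rw [deltaX_eq_zero hN, smul_zero]
    exact (Finset.sum_eq_zero fun t _ => if_neg fun h => hN h.1).symm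

end Residual

end OddXGraph

/-! ### Anticommutation of two actions -/

lemma mergeMap_lt_iff_of_not_chord {i j n : ℕ} (h : ¬(i < n ∧ j < n)) (x : ℕ) :
    mergeMap i j x < n ↔ x < n ∨ (x = i ∨ x = j) ∧ min i j < n := by
  unfold mergeMap
  split_ifs <;> omega

namespace OEdge

lemma eq_of_fields_eq {e f : OEdge} (hsrc : e.src = f.src) (htgt : e.tgt = f.tgt)
    (hlp : e.lp = f.lp) : e = f := by
  cases e
  cases f
  simp_all only

lemma contractArc_lp (i j : ℕ) (e : OEdge) : (e.contractArc i j).lp =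
    if e.src = i ∧ e.tgt = j then false else if e.src = j ∧ e.tgt = i then true else e.lp := by
  unfold contractArc
  split_ifs <;> rfl

lemma contractArc_of_not_chord {n i j : ℕ} (hi : i < n) (hj : j < n) {e : OEdge}
    (he : ¬(e.src < n ∧ e.tgt < n)) : e.contractArc i j = e.map (mergeMap i j) := by
  unfold contractArc
  rw [if_neg (by omega), if_neg (by omega)]
  rfl

lemma contractArc_loop {i j : ℕ} (hij : i ≠ j) {e : OEdge} (he : e.src = e.tgt) :
    e.contractArc i j = e.map (mergeMap i j) := by
  unfold contractArc
  rw [if_neg (by omega), if_neg (by omega)]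
  rfl

lemma ite_or_ite_or_eq {a b c d : Prop} [Decidable a] [Decidable b] [Decidable c] [Decidable d]
    (hbc : c → ¬b) (x : Bool) :
    (if a then false else if b then true else if c then false else if d then true else x) =
      if a ∨ c then false else if b ∨ d then true else x := by
  by_cases a <;> by_cases b <;> by_cases c <;> simp_all

lemma contractArc_contractArc {i j k l : ℕ} (hij : i ≠ j) (hkl : k ≠ l)
    (h : mergeMap i j k ≠ mergeMap i j l) (hik : i ≠ k) (hjl : j ≠ l) (e : OEdge) :
    (e.contractArc i j).contractArc (mergeMap i j k) (mergeMap i j l) =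
      (e.contractArc k l).contractArc (mergeMap k l i) (mergeMap k l j) := by
  refine eq_of_fields_eq ?_ ?_ ?_
  · simp only [contractArc_src, mergeMap_mergeMap hij hkl h]
  · simp only [contractArc_tgt, mergeMap_mergeMap hij hkl h]
  · rw [Ne, mergeMap_eq_iff hij] at h
    simp only [contractArc_lp, contractArc_src, contractArc_tgt, mergeMap_eq_iff hij,
      mergeMap_eq_iff hkl]
    generalize e.src = x
    generalize e.tgt = y
    rw [ite_or_ite_or_eq (by grind), ite_or_ite_or_eq (by grind)]
    congr 1
    · apply propext; constructor <;> grind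
    · congr 1
      apply propext; constructor <;> grind

lemma contractArc_map_mergeMap {i j : ℕ} {e f : OEdge} (he : e.src ≠ e.tgt) (hij : i ≠ j)
    (hends : e.ends ≠ s(i, j))
    (hef : e.ends.map (mergeMap i j) ≠ f.ends.map (mergeMap i j)) :
    (f.map (mergeMap e.src e.tgt)).contractArc (mergeMap e.src e.tgt i) (mergeMap e.src e.tgt j) =
      (f.contractArc i j).map (mergeMap (mergeMap i j e.src) (mergeMap i j e.tgt)) := by
  rw [ends, Ne, Sym2.eq_iff] at hends
  rw [← ends_map, ← ends_map, Ne, ends_eq_iff] at hef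
  simp only [map, mergeMap_eq_iff hij] at hef
  have hne : mergeMap e.src e.tgt i ≠ mergeMap e.src e.tgt j := by
    rw [Ne, mergeMap_eq_iff he]
    omega
  refine eq_of_fields_eq ?_ ?_ ?_
  · simp only [contractArc_src, map, mergeMap_mergeMap he hij hne]
  · simp only [contractArc_tgt, map, mergeMap_mergeMap he hij hne]
  · simp only [contractArc_lp, map, mergeMap_eq_iff he]
    generalize e.src = a at *
    generalize e.tgt = b at *
    generalize f.src = x at *
    generalize f.tgt = y at *
    clear hne
    congr 1
    · apply propext; constructor <;> grind
    · congr 1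
      apply propext; constructor <;> grind

end OEdge

namespace OddXGraph

/-- The distinct edges `s` and `u` become parallel when the arc `t` is contracted. -/
inductive BecomeParallel (g : OddXGraph) : Site → Site → Site → Prop
  | intro {i j : ℕ} {e f : OEdge} (he : e ∈ g.edges) (hf : f ∈ g.edges) (hne : e ≠ f)
    (hends : e.ends.map (mergeMap i j) = f.ends.map (mergeMap i j)) :
    BecomeParallel g (.arc i j) (.edge e) (.edge f)

/-- The two orders of acting at the sites `s` and `t` give the same graph with opposite signs. -/
def Anticommute (g : OddXGraph) (s t : Site) : Prop :=
  g.act₂ s t = g.act₂ t s ∧ g.sign₂ s t = -g.sign₂ t s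

lemma Anticommute.symm {g : OddXGraph} {s t : Site} (h : g.Anticommute s t) :
    g.Anticommute t s := ⟨h.1.symm, by rw [h.2, neg_neg]⟩

section Anticommute

variable {g : OddXGraph}

lemma survives_comm {s t : Site} (hs : s ∈ g.sites) (ht : t ∈ g.sites)
    (h : g.Survives s t) : g.Survives t s := by
  rcases s with e | ⟨i, j⟩ | a <;> rcases t with f | ⟨k, l⟩ | b <;> try trivial
  · obtain ⟨-, hene, he⟩ := edge_mem_sites.1 hs
    obtain ⟨-, hfne, hf⟩ := edge_mem_sites.1 ht
    obtain ⟨hne, hext⟩ := h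
    refine ⟨hne.symm, ?_⟩
    rw [mergeMap_lt_iff_of_not_chord he, mergeMap_lt_iff_of_not_chord he] at hext
    rw [mergeMap_lt_iff_of_not_chord hf, mergeMap_lt_iff_of_not_chord hf]
    rw [min_lt_iff] at hext ⊢
    omega
  · exact mergeMap_ne_of_mergeMap_ne (arc_mem_sites.1 hs).ne (arc_mem_sites.1 ht).ne h
  · exact Ne.symm (show a ≠ b from h)

lemma ends_ne_of_isRegular {e : OEdge} (he : g.isRegular e) {i j : ℕ} (hi : i < g.ve)
    (hj : j < g.ve) : e.ends ≠ s(i, j) := by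
  have hext := he.2
  rw [OEdge.ends, Ne, Sym2.eq_iff]
  omega

lemma anticommute_edge_edge (hg : g.IsAdmissible) {e f : OEdge} (hs : Site.edge e ∈ g.sites)
    (ht : Site.edge f ∈ g.sites) (h : g.Survives (.edge e) (.edge f)) :
    g.Anticommute (.edge e) (.edge f) := by
  obtain ⟨he, hreg⟩ := edge_mem_sites.1 hs
  obtain ⟨hf, hfreg⟩ := edge_mem_sites.1 ht
  have hm : mergeMap e.src e.tgt f.src ≠ mergeMap e.src e.tgt f.tgt :=
    (edge_mem_sites.1 (residual_mem_sites hg hs ht h)).2.1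
  have hcomm := mergeMap_mergeMap hreg.1 hfreg.1 hm
  refine ⟨congrArg₂ (mk g.ve (g.vi - 1 - 1)) ?_ ?_, csign_mul_csign hreg.1 hfreg.1 hm⟩
  · change (((g.edges.erase e).map (OEdge.map _)).erase (OEdge.map _ f)).map (OEdge.map _) =
      (((g.edges.erase f).map (OEdge.map _)).erase (OEdge.map _ e)).map (OEdge.map _)
    rw [← Multiset.map_erase_of_mem _ _ ((Multiset.mem_erase_of_ne h.1.symm).2 hf),
      ← Multiset.map_erase_of_mem _ _ ((Multiset.mem_erase_of_ne h.1).2 he),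
      Multiset.erase_comm, Multiset.map_map, Multiset.map_map]
    refine Multiset.map_congr rfl fun x _ => ?_
    simp only [Function.comp_apply, OEdge.map, hcomm]
  · change (g.crosses.map _).map _ = (g.crosses.map _).map _
    rw [List.map_map, List.map_map]
    exact List.map_congr_left fun x _ => hcomm x

lemma anticommute_arc_arc {i j k l : ℕ} (hij : IsArc g.ve i j) (hkl : IsArc g.ve k l)
    (h : mergeMap i j k ≠ mergeMap i j l) : g.Anticommute (.arc i j) (.arc k l) := by
  have hne : i ≠ k ∧ j ≠ l := by
    rw [Ne, mergeMap_eq_iff hij.ne] at h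
    unfold IsArc at hij hkl
    omega
  refine ⟨congrArg₂ (mk (g.ve - 1 - 1) g.vi) ?_ ?_, csign_mul_csign hij.ne hkl.ne h⟩
  · change (g.edges.map (OEdge.contractArc _ _)).map (OEdge.contractArc _ _) =
      (g.edges.map (OEdge.contractArc _ _)).map (OEdge.contractArc _ _)
    rw [Multiset.map_map, Multiset.map_map]
    exact Multiset.map_congr rfl fun x _ =>
      OEdge.contractArc_contractArc hij.ne hkl.ne h hne.1 hne.2 x
  · change (g.crosses.map _).map _ = (g.crosses.map _).map _
    rw [List.map_map, List.map_map]
    exact List.map_congr_left fun x _ => mergeMap_mergeMap hij.ne hkl.ne h x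

lemma anticommute_edge_arc (hg : g.IsAdmissible) {e : OEdge} {i j : ℕ}
    (hs : Site.edge e ∈ g.sites) (ht : Site.arc i j ∈ g.sites)
    (h : ¬∃ u, g.BecomeParallel (.arc i j) (.edge e) u) :
    g.Anticommute (.edge e) (.arc i j) := by
  obtain ⟨he, hreg⟩ := edge_mem_sites.1 hs
  have hij := arc_mem_sites.1 ht
  have hends := ends_ne_of_isRegular hreg hij.left_lt hij.right_lt
  have hm : mergeMap e.src e.tgt i ≠ mergeMap e.src e.tgt j := by
    rw [OEdge.ends, Ne, Sym2.eq_iff] at hends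
    rw [Ne, mergeMap_eq_iff hreg.1]
    have := hij.ne
    omega
  have hcontract := OEdge.contractArc_of_not_chord hij.left_lt hij.right_lt hreg.2
  refine ⟨congrArg₂ (mk (g.ve - 1) (g.vi - 1)) ?_ ?_, ?_⟩
  · change ((g.edges.erase e).map (OEdge.map _)).map (OEdge.contractArc _ _) =
      ((g.edges.map (OEdge.contractArc i j)).erase (e.contractArc i j)).map (OEdge.map _)
    rw [← Multiset.map_erase_of_mem _ _ he, Multiset.map_map, Multiset.map_map]
    refine Multiset.map_congr rfl fun f hf => ?_
    obtain ⟨hne, hf⟩ := hg.nodup.mem_erase_iff.1 hf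
    rw [Function.comp_apply, Function.comp_apply, OEdge.contractArc_src, OEdge.contractArc_tgt]
    exact OEdge.contractArc_map_mergeMap hreg.1 hij.ne hends fun heq =>
      h ⟨_, .intro he hf hne.symm heq⟩
  · change (g.crosses.map _).map _ = (g.crosses.map _).map _
    rw [List.map_map, List.map_map, hcontract]
    exact List.map_congr_left fun x _ => mergeMap_mergeMap hreg.1 hij.ne hm x
  · change csign _ _ * csign _ _ = -(csign i j * csign (e.contractArc i j).src _)
    rw [hcontract]
    exact csign_mul_csign hreg.1 hij.ne hm

lemma siteSign_cross_act (hg : g.IsAdmissible) {s : Site} (hs : s ∈ g.sites) (a : ℕ) :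
    (g.act s).siteSign (.cross a) = -g.siteSign (.cross a) := by
  have hexp : g.degX + 1 + (a : ℤ) + 1 = g.degX + a + 1 + 1 := by ring
  simp only [siteSign, (degX_act_and_ordX_act hg hs).1]
  rw [hexp, zpow_add_one₀ (by norm_num), mul_neg_one]

lemma siteSign_cross_succ (a : ℕ) : g.siteSign (.cross (a + 1)) = -g.siteSign (.cross a) := by
  have hexp : g.degX + ((a + 1 : ℕ) : ℤ) + 1 = g.degX + a + 1 + 1 := by
    push_cast
    ring
  simp only [siteSign]
  rw [hexp, zpow_add_one₀ (by norm_num), mul_neg_one]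

lemma crossVertex_of_crosses_eq_map {g' : OddXGraph} {f : ℕ → ℕ} {a : ℕ}
    (h : g'.crosses = g.crosses.map f) (ha : a < g.crosses.length) :
    g'.crossVertex a = f (g.crossVertex a) := by
  simp [crossVertex, h, ha]

lemma anticommute_edge_cross (hg : g.IsAdmissible) {e : OEdge} {a : ℕ}
    (hs : Site.edge e ∈ g.sites) (ht : Site.cross a ∈ g.sites) :
    g.Anticommute (.edge e) (.cross a) := by
  have hreg := (edge_mem_sites.1 hs).2
  have ha := cross_mem_sites.1 ht
  refine ⟨congrArg₂ (mk g.ve (g.vi - 1)) ?_ (List.eraseIdx_map _ _ _), ?_⟩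
  · change ⟨(g.contractEdge e).crossVertex a, (g.contractEdge e).crossVertex a, false⟩ ::ₘ
        (g.edges.erase e).map (OEdge.map _) =
      ((⟨g.crossVertex a, g.crossVertex a, false⟩ ::ₘ g.edges).erase e).map (OEdge.map _)
    rw [Multiset.erase_cons_tail _ (by rintro rfl; exact hreg.1 rfl), Multiset.map_cons,
      crossVertex_of_crosses_eq_map rfl ha]
    rfl
  · change csign _ _ * (g.act (.edge e)).siteSign (.cross a) = -(_ * csign _ _)
    rw [siteSign_cross_act hg hs, mul_neg, mul_comm]

lemma anticommute_arc_cross (hg : g.IsAdmissible) {i j a : ℕ} (hs : Site.arc i j ∈ g.sites)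
    (ht : Site.cross a ∈ g.sites) : g.Anticommute (.arc i j) (.cross a) := by
  have hij := arc_mem_sites.1 hs
  have ha := cross_mem_sites.1 ht
  refine ⟨congrArg₂ (mk (g.ve - 1) g.vi) ?_ (List.eraseIdx_map _ _ _), ?_⟩
  · change ⟨(g.contractArc i j).crossVertex a, (g.contractArc i j).crossVertex a, false⟩ ::ₘ
        g.edges.map (OEdge.contractArc i j) =
      (⟨g.crossVertex a, g.crossVertex a, false⟩ ::ₘ g.edges).map (OEdge.contractArc i j)
    rw [Multiset.map_cons, OEdge.contractArc_loop hij.ne rfl,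
      crossVertex_of_crosses_eq_map rfl ha]
    rfl
  · change csign _ _ * (g.act (.arc i j)).siteSign (.cross a) = -(_ * csign _ _)
    rw [siteSign_cross_act hg hs, mul_neg, mul_comm]

lemma anticommute_cross_cross_of_lt (hg : g.IsAdmissible) {a b : ℕ}
    (hs : Site.cross a ∈ g.sites) (ht : Site.cross b ∈ g.sites) (hab : a < b) :
    g.Anticommute (.cross a) (.cross b) := by
  obtain ⟨c, rfl⟩ : ∃ c, b = c + 1 := ⟨b - 1, by omega⟩
  have hresa : (Site.cross a).residual (.cross (c + 1)) = .cross c := by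
    simp only [Site.residual, if_neg (show ¬c + 1 < a by omega), Nat.add_sub_cancel]
  have hresb : (Site.cross (c + 1)).residual (.cross a) = .cross a := by
    simp only [Site.residual, if_pos hab]
  unfold Anticommute act₂ sign₂
  rw [hresa, hresb, siteSign_cross_act hg hs, siteSign_cross_act hg ht, siteSign_cross_succ]
  refine ⟨congrArg₂ (mk g.ve g.vi) ?_ ?_, by ring⟩
  · have hc : (g.deleteCrossAt a).crossVertex c = g.crossVertex (c + 1) := by
      simp only [crossVertex, deleteCrossAt, List.getElem?_eraseIdx,
        if_neg (show ¬c < a by omega)]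
    have ha : (g.deleteCrossAt (c + 1)).crossVertex a = g.crossVertex a := by
      simp only [crossVertex, deleteCrossAt, List.getElem?_eraseIdx, if_pos hab]
    change ⟨(g.deleteCrossAt a).crossVertex c, (g.deleteCrossAt a).crossVertex c, false⟩ ::ₘ
        ⟨g.crossVertex a, g.crossVertex a, false⟩ ::ₘ g.edges =
      ⟨(g.deleteCrossAt (c + 1)).crossVertex a, (g.deleteCrossAt (c + 1)).crossVertex a, false⟩ ::ₘ
        ⟨g.crossVertex (c + 1), g.crossVertex (c + 1), false⟩ ::ₘ g.edges
    rw [hc, ha, Multiset.cons_swap]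
  · change (g.crosses.eraseIdx a).eraseIdx c = (g.crosses.eraseIdx (c + 1)).eraseIdx a
    refine List.ext_getElem? fun n => ?_
    simp only [List.getElem?_eraseIdx]
    split_ifs <;> first | rfl | omega

lemma anticommute_cross_cross (hg : g.IsAdmissible) {a b : ℕ} (hs : Site.cross a ∈ g.sites)
    (ht : Site.cross b ∈ g.sites) (hab : a ≠ b) : g.Anticommute (.cross a) (.cross b) := by
  rcases hab.lt_or_gt with h | h
  · exact anticommute_cross_cross_of_lt hg hs ht h
  · exact (anticommute_cross_cross_of_lt hg ht hs h).symm

lemma anticommute (hg : g.IsAdmissible) {s t : Site} (hs : s ∈ g.sites) (ht : t ∈ g.sites)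
    (h : g.Survives s t) (hst : ¬∃ u, g.BecomeParallel t s u)
    (hts : ¬∃ u, g.BecomeParallel s t u) : g.Anticommute s t := by
  rcases s with e | ⟨i, j⟩ | a <;> rcases t with f | ⟨k, l⟩ | b
  · exact anticommute_edge_edge hg hs ht h
  · exact anticommute_edge_arc hg hs ht hst
  · exact anticommute_edge_cross hg hs ht
  · exact (anticommute_edge_arc hg ht hs hts).symm
  · exact anticommute_arc_arc (arc_mem_sites.1 hs) (arc_mem_sites.1 ht) h
  · exact anticommute_arc_cross hg hs ht
  · exact (anticommute_edge_cross hg ht hs).symm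
  · exact (anticommute_arc_cross hg ht hs).symm
  · exact anticommute_cross_cross hg hs ht h

end Anticommute

section Nodup

variable {g : OddXGraph}

lemma nodup_ends_of_act {s : Site} (h : ((g.act s).edges.map OEdge.ends).Nodup)
    (hs : ∀ e, s = .edge e → ∀ f ∈ g.edges.erase e, e.ends ≠ f.ends) :
    (g.edges.map OEdge.ends).Nodup := by
  rcases s with e | ⟨i, j⟩ | a
  · have herase : ((g.edges.erase e).map OEdge.ends).Nodup := by
      refine Multiset.Nodup.of_map (Sym2.map (mergeMap e.src e.tgt)) ?_
      change (((g.edges.erase e).map (OEdge.map _)).map OEdge.ends).Nodup at h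
      rw [Multiset.map_map] at h ⊢
      exact h
    by_cases he : e ∈ g.edges
    · rw [← Multiset.cons_erase he, Multiset.map_cons, Multiset.nodup_cons]
      refine ⟨fun hmem => ?_, herase⟩
      obtain ⟨f, hf, hends⟩ := Multiset.mem_map.1 hmem
      exact hs e rfl f hf hends.symm
    · rwa [Multiset.erase_of_notMem he] at herase
  · refine Multiset.Nodup.of_map (Sym2.map (mergeMap i j)) ?_
    change ((g.edges.map (OEdge.contractArc i j)).map OEdge.ends).Nodup at h
    rw [Multiset.map_map] at h ⊢
    exact (Multiset.map_congr rfl fun f _ => OEdge.ends_contractArc i j f) ▸ h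
  · exact (Multiset.nodup_cons.1 (by rw [← Multiset.map_cons]; exact h)).2

-- Both the assumption and the conclusion mean that the three edges form a triangle.
lemma ends_map_mergeMap_eq {e f h : OEdge} (he : e.src ≠ e.tgt) (hf : f.src ≠ f.tgt)
    (hef : e.ends ≠ f.ends) (hfh : f.ends ≠ h.ends)
    (hpar : f.ends.map (mergeMap e.src e.tgt) = h.ends.map (mergeMap e.src e.tgt)) :
    e.ends.map (mergeMap f.src f.tgt) = h.ends.map (mergeMap f.src f.tgt) := by
  rw [← OEdge.ends_map, ← OEdge.ends_map, OEdge.ends_eq_iff] at hpar ⊢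
  rw [Ne, OEdge.ends_eq_iff] at hef hfh
  simp only [OEdge.map, mergeMap_eq_iff he, mergeMap_eq_iff hf] at hpar ⊢
  grind

lemma nodup_ends_act_edge_of_act₂ (hg : g.IsAdmissible) {e f : OEdge}
    (he : Site.edge e ∈ g.sites) (hf : Site.edge f ∈ g.sites) (hef : e ≠ f)
    (hact : ((g.act (.edge f)).edges.map OEdge.ends).Nodup)
    (hact₂ : ((g.act₂ (.edge e) (.edge f)).edges.map OEdge.ends).Nodup) :
    ((g.act (.edge e)).edges.map OEdge.ends).Nodup := by
  obtain ⟨he, hreg⟩ := edge_mem_sites.1 he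
  obtain ⟨hf, hfreg⟩ := edge_mem_sites.1 hf
  have hfe : f ∈ g.edges.erase e := (Multiset.mem_erase_of_ne hef.symm).2 hf
  refine nodup_ends_of_act hact₂ ?_
  rintro _ ⟨⟩ b hb hpar
  change b ∈ ((g.edges.erase e).map (OEdge.map _)).erase (OEdge.map _ f) at hb
  rw [← Multiset.map_erase_of_mem _ _ hfe] at hb
  obtain ⟨h, hh, rfl⟩ := Multiset.mem_map.1 hb
  obtain ⟨hhf, hhe⟩ := (hg.nodup.erase e).mem_erase_iff.1 hh
  obtain ⟨hhe, hh⟩ := hg.nodup.mem_erase_iff.1 hhe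
  have hends := ends_map_mergeMap_eq hreg.1 hfreg.1
    (fun heq => hef (hg.eq_of_ends_eq he hf heq))
    (fun heq => hhf (hg.eq_of_ends_eq hf hh heq).symm) hpar
  change (((g.edges.erase f).map (OEdge.map _)).map OEdge.ends).Nodup at hact
  rw [Multiset.map_map] at hact
  exact hhe (Multiset.inj_on_of_nodup_map hact e ((Multiset.mem_erase_of_ne hef).2 he) h
    ((Multiset.mem_erase_of_ne hhf).2 hh) hends).symm

lemma nodup_ends_act_of_act₂ (hg : g.IsAdmissible) {s t : Site} (hs : s ∈ g.sites)
    (ht : t ∈ g.sites) (hst : g.Survives s t) (hpar : ¬∃ u, g.BecomeParallel s t u)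
    (hact : ((g.act t).edges.map OEdge.ends).Nodup)
    (hact₂ : ((g.act₂ s t).edges.map OEdge.ends).Nodup) :
    ((g.act s).edges.map OEdge.ends).Nodup := by
  rcases s with e | ⟨i, j⟩ | a <;> rcases t with f | ⟨k, l⟩ | b
  · exact nodup_ends_act_edge_of_act₂ hg hs ht hst.1 hact hact₂
  · exact nodup_ends_of_act hact₂ nofun
  · exact nodup_ends_of_act hact₂ nofun
  · refine nodup_ends_of_act hact₂ ?_
    rintro _ ⟨⟩ b hb hends
    have hf := (edge_mem_sites.1 ht).1
    change b ∈ (g.edges.map (OEdge.contractArc i j)).erase _ at hb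
    rw [← Multiset.map_erase_of_mem _ _ hf] at hb
    obtain ⟨h, hh, rfl⟩ := Multiset.mem_map.1 hb
    obtain ⟨hhf, hh⟩ := hg.nodup.mem_erase_iff.1 hh
    rw [OEdge.ends_contractArc, OEdge.ends_contractArc] at hends
    exact hpar ⟨_, .intro hf hh hhf.symm hends⟩
  · exact nodup_ends_of_act hact₂ nofun
  · exact nodup_ends_of_act hact₂ nofun
  · obtain ⟨hf, hfreg⟩ := edge_mem_sites.1 ht
    refine nodup_ends_of_act hact₂ ?_
    rintro _ ⟨⟩ b hb hends
    change b ∈ (_ ::ₘ g.edges).erase f at hb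
    rw [Multiset.erase_cons_tail _ (by rintro rfl; exact hfreg.1 rfl), Multiset.mem_cons] at hb
    rcases hb with rfl | hb
    · rcases OEdge.ends_eq_iff.1 hends with ⟨hsrc, htgt⟩ | ⟨hsrc, htgt⟩ <;>
        exact hfreg.1 (hsrc.trans htgt.symm)
    · obtain ⟨hbf, hb⟩ := hg.nodup.mem_erase_iff.1 hb
      exact hbf (hg.eq_of_ends_eq hf hb hends).symm
  · exact nodup_ends_of_act hact₂ nofun
  · exact nodup_ends_of_act hact₂ nofun

lemma siteTerm₂_eq (hg : g.IsAdmissible) {s t : Site} (hs : s ∈ g.sites) (hst : g.Survives s t)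
    (h : ((g.act₂ s t).edges.map OEdge.ends).Nodup → ((g.act s).edges.map OEdge.ends).Nodup) :
    g.siteTerm₂ s t = g.sign₂ s t • (g.act₂ s t).toDoX := by
  by_cases hact₂ : (g.act₂ s t).IsAdmissible
  · exact if_pos ⟨(isAdmissible_act_iff hg hs).2 (h hact₂.nodup_ends), hst⟩
  · rw [toDoX_eq_zero hact₂, smul_zero, siteTerm₂, toDoX_eq_zero hact₂, smul_zero, ite_self]

lemma siteTerm₂_eq_neg_of_isAdmissible_act (hg : g.IsAdmissible) {s t : Site} (hs : s ∈ g.sites)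
    (ht : t ∈ g.sites) (hst : g.Survives s t) (hpar : ¬∃ u, g.BecomeParallel t s u)
    (hpar' : ¬∃ u, g.BecomeParallel s t u) (hact : (g.act t).IsAdmissible) :
    g.siteTerm₂ s t = -g.siteTerm₂ t s := by
  obtain ⟨hgraph, hsign⟩ := anticommute hg hs ht hst hpar hpar'
  rw [siteTerm₂_eq hg hs hst (nodup_ends_act_of_act₂ hg hs ht hst hpar' hact.nodup_ends),
    siteTerm₂, if_pos ⟨hact, survives_comm hs ht hst⟩, hgraph, hsign, neg_smul]

lemma siteTerm₂_eq_neg (hg : g.IsAdmissible) {s t : Site} (hs : s ∈ g.sites) (ht : t ∈ g.sites)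
    (hpar : ¬∃ u, g.BecomeParallel t s u) (hpar' : ¬∃ u, g.BecomeParallel s t u) :
    g.siteTerm₂ s t = -g.siteTerm₂ t s := by
  by_cases hst : g.Survives s t
  · have hts := survives_comm hs ht hst
    by_cases hact : (g.act t).IsAdmissible
    · exact siteTerm₂_eq_neg_of_isAdmissible_act hg hs ht hst hpar hpar' hact
    by_cases hact' : (g.act s).IsAdmissible
    · rw [siteTerm₂_eq_neg_of_isAdmissible_act hg ht hs hts hpar' hpar hact', neg_neg]
    · rw [siteTerm₂, siteTerm₂, if_neg fun h => hact' h.1, if_neg fun h => hact h.1, neg_zero]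
  · have hts : ¬g.Survives t s := fun h => hst (survives_comm ht hs h)
    rw [siteTerm₂, siteTerm₂, if_neg fun h => hst h.2, if_neg fun h => hts h.2, neg_zero]

end Nodup

/-! ### Triangles resting on an arc -/

section BecomeParallel

variable {g : OddXGraph} {s t u : Site} {i j : ℕ} {e f : OEdge}

lemma BecomeParallel.symm (h : g.BecomeParallel t s u) : g.BecomeParallel t u s := by
  obtain ⟨he, hf, hne, hends⟩ := h
  exact .intro hf he hne.symm hends.symm

lemma BecomeParallel.ne (h : g.BecomeParallel t s u) : s ≠ u := by
  obtain ⟨-, -, hne, -⟩ := h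
  exact fun h => hne (Site.edge.inj h)

lemma BecomeParallel.not_isAdmissible_act (h : g.BecomeParallel t s u) :
    ¬(g.act t).IsAdmissible := by
  obtain @⟨i, j, e, f, he, hf, hne, hends⟩ := h
  intro hact
  have hnodup : ((g.edges.map (OEdge.contractArc i j)).map OEdge.ends).Nodup := hact.nodup_ends
  rw [Multiset.map_map] at hnodup
  refine hne (Multiset.inj_on_of_nodup_map hnodup e he f hf ?_)
  rw [Function.comp_apply, Function.comp_apply, OEdge.ends_contractArc, OEdge.ends_contractArc,
    hends]

lemma isRegular.exists_ends_eq (he : g.isRegular e) :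
    ∃ a y, a ≠ y ∧ g.ve ≤ y ∧ e.ends = s(a, y) := by
  obtain ⟨hne, hchord⟩ := he
  by_cases h : g.ve ≤ e.tgt
  · exact ⟨e.src, e.tgt, hne, h, rfl⟩
  · exact ⟨e.tgt, e.src, hne.symm, by omega, Sym2.eq_swap⟩

lemma exists_ends_eq_of_becomeParallel (hg : g.IsAdmissible) (hij : IsArc g.ve i j)
    (he : g.isRegular e) (h : g.BecomeParallel (.arc i j) (.edge e) (.edge f)) :
    ∃ a b y, s(a, b) = s(i, j) ∧ g.ve ≤ y ∧ e.ends = s(a, y) ∧ f.ends = s(b, y) := by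
  obtain ⟨he', hf, hne, hends⟩ := h
  have hpar : e.ends ≠ f.ends := fun h => hne (hg.eq_of_ends_eq he' hf h)
  obtain ⟨a, y, hay, hy, hea⟩ := he.exists_ends_eq
  have hi := hij.left_lt
  have hj := hij.right_lt
  obtain ⟨b, hb, hfb⟩ : ∃ b, mergeMap i j a = mergeMap i j b ∧ f.ends = s(b, y) := by
    rw [hea, OEdge.ends, Sym2.map_mk, Sym2.map_mk, Sym2.eq_iff] at hends
    rcases hends with ⟨h₁, h₂⟩ | ⟨h₁, h₂⟩ <;> have := (mergeMap_eq_iff hij.ne _ _).1 h₂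
    · exact ⟨f.src, h₁, by rw [OEdge.ends, show f.tgt = y by omega]⟩
    · exact ⟨f.tgt, h₁, by rw [OEdge.ends, show f.src = y by omega, Sym2.eq_swap]⟩
  have hab : a ≠ b := fun h => hpar (by rw [hea, hfb, h])
  have hb := (mergeMap_eq_iff hij.ne _ _).1 hb
  exact ⟨a, b, y, Sym2.eq_iff.2 (by omega), hy, hea, hfb⟩

lemma BecomeParallel.mem_sites (hg : g.IsAdmissible) (ht : t ∈ g.sites) (hs : s ∈ g.sites)
    (h : g.BecomeParallel t s u) : u ∈ g.sites := by
  obtain @⟨i, j, e, f, he, hf, hne, hends⟩ := h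
  have hij := arc_mem_sites.1 ht
  obtain ⟨a, b, y, hab, hy, -, hfb⟩ :=
    exists_ends_eq_of_becomeParallel hg hij (edge_mem_sites.1 hs).2 (.intro he hf hne hends)
  have hi := hij.left_lt
  have hj := hij.right_lt
  rw [Sym2.eq_iff] at hab
  rw [OEdge.ends, Sym2.eq_iff] at hfb
  exact edge_mem_sites.2 ⟨hf, by omega, by omega⟩

lemma BecomeParallel.right_unique (hg : g.IsAdmissible) (ht : t ∈ g.sites) (hs : s ∈ g.sites)
    {u' : Site} (h : g.BecomeParallel t s u) (h' : g.BecomeParallel t s u') : u = u' := by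
  obtain @⟨i, j, e, f, he, hf, hne, hends⟩ := h
  obtain @⟨_, _, _, f', -, hf', hne', hends'⟩ := h'
  have hij := arc_mem_sites.1 ht
  have he' := (edge_mem_sites.1 hs).2
  obtain ⟨a, b, y, hab, hy, hea, hfb⟩ :=
    exists_ends_eq_of_becomeParallel hg hij he' (.intro he hf hne hends)
  obtain ⟨a', b', y', hab', hy', hea', hfb'⟩ :=
    exists_ends_eq_of_becomeParallel hg hij he' (.intro he hf' hne' hends')
  have hi := hij.left_lt
  have hj := hij.right_lt
  rw [Sym2.eq_iff] at hab hab'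
  rw [hea, Sym2.eq_iff] at hea'
  obtain ⟨rfl, rfl⟩ : b = b' ∧ y = y' := by omega
  rw [hg.eq_of_ends_eq hf hf' (hfb.trans hfb'.symm)]

end BecomeParallel

end OddXGraph

namespace OEdge

lemma contractArc_mk (i j : ℕ) (l : Bool) :
    contractArc i j ⟨i, j, l⟩ = ⟨min i j, min i j, false⟩ := if_pos ⟨rfl, rfl⟩

lemma contractArc_mk_swap {i j : ℕ} (hij : i ≠ j) (l : Bool) :
    contractArc i j ⟨j, i, l⟩ = ⟨min i j, min i j, true⟩ := by
  unfold contractArc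
  rw [if_neg fun h => hij h.2, if_pos ⟨rfl, rfl⟩]

lemma contractArc_mk_congr {i j a b : ℕ} (hij : i ≠ j) (hab : s(a, b) = s(i, j)) (l l' : Bool) :
    contractArc i j ⟨a, b, l⟩ = contractArc i j ⟨a, b, l'⟩ := by
  rcases Sym2.eq_iff.1 hab with ⟨rfl, rfl⟩ | ⟨rfl, rfl⟩
  · rw [contractArc_mk, contractArc_mk]
  · rw [contractArc_mk_swap hij, contractArc_mk_swap hij]

lemma contractArc_mk_eq_flipOEdgeX {i j a b : ℕ} (hij : i ≠ j) (hab : s(a, b) = s(i, j))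
    (l l' : Bool) :
    contractArc i j ⟨a, b, l⟩ = flipOEdgeX (contractArc i j ⟨b, a, l'⟩) := by
  rcases Sym2.eq_iff.1 hab with ⟨rfl, rfl⟩ | ⟨rfl, rfl⟩ <;>
    rw [contractArc_mk, contractArc_mk_swap hij, flipOEdgeX, if_pos rfl] <;> rfl

lemma contractArc_map_mergeMap_of_triangle {i j a b y : ℕ} {e f : OEdge} (hij : i ≠ j)
    (hab : s(a, b) = s(i, j)) (ha : a < y) (hb : b < y) (he : e.ends = s(a, y))
    (hf : f.ends = s(b, y)) :
    (csign e.src e.tgt = csign f.src f.tgt ∧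
        (e.map (mergeMap f.src f.tgt)).contractArc i j =
          flipOEdgeX ((f.map (mergeMap e.src e.tgt)).contractArc i j)) ∨
      (csign e.src e.tgt = -csign f.src f.tgt ∧
        (e.map (mergeMap f.src f.tgt)).contractArc i j =
          (f.map (mergeMap e.src e.tgt)).contractArc i j) := by
  have hba : s(b, a) = s(i, j) := Sym2.eq_swap.trans hab
  have hcsign {x : ℕ} (hx : x < y) : csign x y = (-1) ^ (y + 1) ∧ csign y x = (-1) ^ y :=
    ⟨if_pos hx, if_neg hx.not_gt⟩
  obtain ⟨e₁, e₂, el⟩ := e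
  obtain ⟨f₁, f₂, fl⟩ := f
  have hmap {x z : ℕ} (hx : x < y) (hz : z < y) :
      mergeMap x y z = z ∧ mergeMap x y y = x ∧ mergeMap y x z = z ∧ mergeMap y x y = x := by
    unfold mergeMap
    split_ifs <;> omega
  rcases Sym2.eq_iff.1 he with ⟨rfl, rfl⟩ | ⟨rfl, rfl⟩ <;>
    rcases Sym2.eq_iff.1 hf with ⟨rfl, rfl⟩ | ⟨rfl, rfl⟩ <;>
    simp only [map, hcsign ha, hcsign hb, hmap ha hb, hmap hb ha]
  · exact .inl ⟨trivial, contractArc_mk_eq_flipOEdgeX hij hab _ _⟩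
  · exact .inr ⟨by rw [pow_succ, mul_neg_one], contractArc_mk_congr hij hab _ _⟩
  · exact .inr ⟨by rw [pow_succ, mul_neg_one, neg_neg], contractArc_mk_congr hij hba _ _⟩
  · exact .inl ⟨trivial, contractArc_mk_eq_flipOEdgeX hij hba _ _⟩

end OEdge

namespace OddXGraph

lemma eq_of_fields_eq {g g' : OddXGraph} (hve : g.ve = g'.ve) (hvi : g.vi = g'.vi)
    (hedges : g.edges = g'.edges) (hcrosses : g.crosses = g'.crosses) : g = g' := by
  cases g
  cases g'
  simp_all only

section BecomeParallel

variable {g : OddXGraph} {s t u : Site} {i j : ℕ} {e f : OEdge}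

lemma act₂_edge_arc (hij : IsArc g.ve i j) (he : g.isRegular e) :
    g.act₂ (.edge e) (.arc i j) = (g.contractEdge e).contractArc i j := by
  unfold act₂
  simp only [Site.residual, Site.map, hij.mergeMap_left_of_not_chord he.2,
    hij.mergeMap_right_of_not_chord he.2]
  rfl

lemma sign₂_edge_arc (hij : IsArc g.ve i j) (he : g.isRegular e) :
    g.sign₂ (.edge e) (.arc i j) = csign e.src e.tgt * csign i j := by
  unfold sign₂
  simp only [Site.residual, Site.map, hij.mergeMap_left_of_not_chord he.2,
    hij.mergeMap_right_of_not_chord he.2]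
  rfl

lemma edges_act₂_edge_arc (hij : IsArc g.ve i j) (he : g.isRegular e) (hf : f ∈ g.edges.erase e) :
    (g.act₂ (.edge e) (.arc i j)).edges =
      (f.map (mergeMap e.src e.tgt)).contractArc i j ::ₘ
        ((g.edges.erase e).erase f).map
          fun x => (x.map (mergeMap e.src e.tgt)).contractArc i j := by
  rw [act₂_edge_arc hij he]
  change ((g.edges.erase e).map (OEdge.map _)).map (OEdge.contractArc i j) = _
  rw [Multiset.map_map]
  conv_lhs => rw [← Multiset.cons_erase hf, Multiset.map_cons]
  rfl

lemma contractArc_map_mergeMap_of_not_becomeParallel (hij : IsArc g.ve i j) (he : e ∈ g.edges)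
    (hreg : g.isRegular e) {x : OEdge} (hx : x ∈ g.edges) (hex : e ≠ x)
    (h : ¬g.BecomeParallel (.arc i j) (.edge e) (.edge x)) :
    (x.map (mergeMap e.src e.tgt)).contractArc i j =
      (x.contractArc i j).map (mergeMap (mergeMap i j e.src) (mergeMap i j e.tgt)) := by
  have hmap := OEdge.contractArc_map_mergeMap (f := x) hreg.1 hij.ne
    (ends_ne_of_isRegular hreg hij.left_lt hij.right_lt) fun heq => h (.intro he hx hex heq)
  rwa [hij.mergeMap_left_of_not_chord hreg.2, hij.mergeMap_right_of_not_chord hreg.2] at hmap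

lemma BecomeParallel.contractArc_map_mergeMap (hg : g.IsAdmissible)
    (h : g.BecomeParallel (.arc i j) (.edge e) (.edge f)) (hij : Site.arc i j ∈ g.sites)
    (he : Site.edge e ∈ g.sites) (hf : Site.edge f ∈ g.sites) {x : OEdge}
    (hx : x ∈ (g.edges.erase e).erase f) :
    (x.map (mergeMap e.src e.tgt)).contractArc i j =
      (x.map (mergeMap f.src f.tgt)).contractArc i j := by
  obtain ⟨hxf, hxe⟩ := (hg.nodup.erase e).mem_erase_iff.1 hx
  obtain ⟨hxe, hx⟩ := hg.nodup.mem_erase_iff.1 hxe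
  rw [contractArc_map_mergeMap_of_not_becomeParallel (arc_mem_sites.1 hij)
      (edge_mem_sites.1 he).1 (edge_mem_sites.1 he).2 hx hxe.symm
      fun hpar => hxf (Site.edge.inj (hpar.right_unique hg hij he h)),
    contractArc_map_mergeMap_of_not_becomeParallel (arc_mem_sites.1 hij)
      (edge_mem_sites.1 hf).1 (edge_mem_sites.1 hf).2 hx hxf.symm
      fun hpar => hxe (Site.edge.inj (hpar.right_unique hg hij hf h.symm))]
  obtain ⟨-, -, -, hends⟩ := h
  rw [mergeMap_congr hends]

lemma crosses_act₂_edge_arc (hg : g.IsAdmissible) (hij : IsArc g.ve i j) (he : g.isRegular e) :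
    (g.act₂ (.edge e) (.arc i j)).crosses = g.crosses.map (mergeMap i j) := by
  rw [act₂_edge_arc hij he]
  change (g.crosses.map _).map _ = _
  rw [List.map_map]
  refine List.map_congr_left fun c hc => ?_
  have hc := hg.cross_lt hc
  have he := he.2
  rw [Function.comp_apply, mergeMap_eq_self_of_lt (i := e.src) (by omega)]

lemma BecomeParallel.act₂_eq_reverseEdge_or_eq (hg : g.IsAdmissible)
    (h : g.BecomeParallel (.arc i j) (.edge e) (.edge f)) (hij : Site.arc i j ∈ g.sites)
    (he : Site.edge e ∈ g.sites) (hf : Site.edge f ∈ g.sites) :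
    (csign e.src e.tgt = csign f.src f.tgt ∧
        ∃ x ∈ (g.act₂ (.edge e) (.arc i j)).edges,
          g.act₂ (.edge f) (.arc i j) = reverseEdge x (g.act₂ (.edge e) (.arc i j))) ∨
      (csign e.src e.tgt = -csign f.src f.tgt ∧
        g.act₂ (.edge f) (.arc i j) = g.act₂ (.edge e) (.arc i j)) := by
  have harc := arc_mem_sites.1 hij
  obtain ⟨hmem, hreg⟩ := edge_mem_sites.1 he
  obtain ⟨hmem', hreg'⟩ := edge_mem_sites.1 hf
  have hne : e ≠ f := fun heq => h.ne (congrArg _ heq)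
  have hedges := edges_act₂_edge_arc harc hreg ((Multiset.mem_erase_of_ne hne.symm).2 hmem')
  have hedges' := edges_act₂_edge_arc harc hreg' ((Multiset.mem_erase_of_ne hne).2 hmem)
  rw [Multiset.erase_comm, ← Multiset.map_congr rfl fun x hx =>
    h.contractArc_map_mergeMap hg hij he hf hx] at hedges'
  have hcrosses := (crosses_act₂_edge_arc hg harc hreg').trans
    (crosses_act₂_edge_arc hg harc hreg).symm
  have hve : (g.act₂ (.edge f) (.arc i j)).ve = (g.act₂ (.edge e) (.arc i j)).ve := rfl
  have hvi : (g.act₂ (.edge f) (.arc i j)).vi = (g.act₂ (.edge e) (.arc i j)).vi := rfl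
  obtain ⟨a, b, y, hab, hy, hea, hfb⟩ := exists_ends_eq_of_becomeParallel hg harc hreg h
  have hlt : a < y ∧ b < y := by
    have hi := harc.left_lt
    have hj := harc.right_lt
    have := Sym2.eq_iff.1 hab
    omega
  rcases OEdge.contractArc_map_mergeMap_of_triangle harc.ne hab hlt.1 hlt.2 hea hfb with
    ⟨hsign, hloop⟩ | ⟨hsign, hloop⟩
  · refine .inl ⟨hsign, _, hedges ▸ Multiset.mem_cons_self _ _,
      eq_of_fields_eq hve hvi ?_ hcrosses⟩
    rw [reverseEdge, hedges, hedges', hloop, Multiset.erase_cons_head]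
  · refine .inr ⟨hsign, eq_of_fields_eq hve hvi ?_ hcrosses⟩
    rw [hedges, hedges', hloop]

lemma BecomeParallel.sign₂_smul_add_sign₂_smul (hg : g.IsAdmissible)
    (h : g.BecomeParallel (.arc i j) (.edge e) (.edge f)) (hij : Site.arc i j ∈ g.sites)
    (he : Site.edge e ∈ g.sites) (hf : Site.edge f ∈ g.sites) :
    g.sign₂ (.edge e) (.arc i j) • (g.act₂ (.edge e) (.arc i j)).toDoX +
      g.sign₂ (.edge f) (.arc i j) • (g.act₂ (.edge f) (.arc i j)).toDoX = 0 := by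
  have harc := arc_mem_sites.1 hij
  rw [sign₂_edge_arc harc (edge_mem_sites.1 he).2, sign₂_edge_arc harc (edge_mem_sites.1 hf).2]
  rcases h.act₂_eq_reverseEdge_or_eq hg hij he hf with ⟨hsign, x, hx, hrev⟩ | ⟨hsign, heq⟩
  · rw [hrev, toDoX_reverseEdge hx, hsign]
    module
  · rw [heq, hsign]
    module

lemma siteTerm₂_edge_arc (hg : g.IsAdmissible) (he : Site.edge e ∈ g.sites) :
    g.siteTerm₂ (.edge e) (.arc i j) =
      g.sign₂ (.edge e) (.arc i j) • (g.act₂ (.edge e) (.arc i j)).toDoX :=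
  siteTerm₂_eq hg he trivial fun h =>
    nodup_ends_of_act (s := (Site.edge e).residual (.arc i j)) h fun _ heq => by cases heq

lemma BecomeParallel.siteTerm₂_add_siteTerm₂ (hg : g.IsAdmissible) (h : g.BecomeParallel t s u)
    (ht : t ∈ g.sites) (hs : s ∈ g.sites) (hu : u ∈ g.sites) :
    g.siteTerm₂ s t + g.siteTerm₂ u t = 0 := by
  obtain @⟨i, j, e, f, he, hf, hne, hends⟩ := h
  rw [siteTerm₂_edge_arc hg hs, siteTerm₂_edge_arc hg hu]
  exact (BecomeParallel.intro he hf hne hends).sign₂_smul_add_sign₂_smul hg ht hs hu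

lemma sum_siteTerm₂_of_becomeParallel (hg : g.IsAdmissible) (ht : t ∈ g.sites) :
    ∑ s ∈ g.sites with ∃ u, g.BecomeParallel t s u, g.siteTerm₂ s t = 0 := by
  have hpartner : ∀ s ∈ g.sites.filter fun s => ∃ u, g.BecomeParallel t s u,
      ∃ u, g.BecomeParallel t s u := fun s hs => (Finset.mem_filter.1 hs).2
  choose partner hpar using hpartner
  have hmem s hs : partner s hs ∈ g.sites.filter fun s => ∃ u, g.BecomeParallel t s u :=
    Finset.mem_filter.2
      ⟨(hpar s hs).mem_sites hg ht (Finset.mem_filter.1 hs).1, s, (hpar s hs).symm⟩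
  refine Finset.sum_involution partner (fun s hs => ?_) (fun s hs _ => (hpar s hs).ne.symm) hmem
    fun s hs => ?_
  · exact (hpar s hs).siteTerm₂_add_siteTerm₂ hg ht (Finset.mem_filter.1 hs).1
      (Finset.mem_filter.1 (hmem s hs)).1
  · exact (hpar _ (hmem s hs)).right_unique hg ht (Finset.mem_filter.1 (hmem s hs)).1
      (hpar s hs).symm

end BecomeParallel

/-! ### The coboundary -/

lemma sum_siteSign_smul_deltaX_act {g : OddXGraph} (hg : g.IsAdmissible) :
    ∑ s ∈ g.sites, g.siteSign s • (g.act s).deltaX = 0 := by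
  rw [Finset.sum_congr rfl fun s hs => siteSign_smul_deltaX_act hg hs]
  have : IsAddTorsionFree DoX := .of_isTorsionFree ℝ DoX
  refine sum_sum_eq_zero_of_antisymm (fun s t => ∃ u, g.BecomeParallel t s u)
    (fun s hs t ht hpar hpar' => siteTerm₂_eq_neg hg hs ht hpar hpar') ?_
    fun t ht => sum_siteTerm₂_of_becomeParallel hg ht
  rintro s - t - ⟨u, hpar⟩
  exact if_neg fun h => hpar.not_isAdmissible_act h.1

lemma oddXRelations_le_ker_linearCombination_deltaX :
    oddXRelations ≤ LinearMap.ker (Finsupp.linearCombination ℝ deltaX) := by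
  refine Submodule.span_le.2 ?_
  rintro x (((⟨g, hg, rfl⟩ | ⟨g, hg, rfl⟩) | ⟨g, hg, rfl⟩) | ⟨g, g', ε, h, rfl⟩) <;>
    refine LinearMap.mem_ker.2 ?_
  · rw [Finsupp.linearCombination_single, deltaX_eq_zero fun h => hg h.isValid, smul_zero]
  · rw [Finsupp.linearCombination_single,
      deltaX_eq_zero fun h => (isAdmissible_iff.1 h).2.1 hg, smul_zero]
  · rw [Finsupp.linearCombination_single, deltaX_eq_zero fun h => h.not_hasInternalLoop hg,
      smul_zero]
  · rw [map_sub, map_smul, Finsupp.linearCombination_single, Finsupp.linearCombination_single,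
      deltaX_eq_smul h, one_smul, one_smul, sub_self]

/-- The operator `δ̃` on the extended odd graph complex. -/
noncomputable def coboundary : DoX →ₗ[ℝ] DoX :=
  oddXRelations.liftQ (Finsupp.linearCombination ℝ deltaX)
    oddXRelations_le_ker_linearCombination_deltaX

lemma coboundary_toDoX (g : OddXGraph) : coboundary g.toDoX = g.deltaX :=
  (Finsupp.linearCombination_single ℝ 1 g).trans (one_smul ℝ _)

lemma coboundary_deltaX (g : OddXGraph) : coboundary g.deltaX = 0 := by
  by_cases hg : g.IsAdmissible
  · rw [deltaX_eq_sum hg, map_sum, ← sum_siteSign_smul_deltaX_act hg]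
    simp only [siteTerm, map_smul, coboundary_toDoX]
  · rw [deltaX_eq_zero hg, map_zero]

lemma coboundary_comp_coboundary : coboundary ∘ₗ coboundary = 0 := by
  refine Submodule.linearMap_qext _ (Finsupp.lhom_ext' fun g => LinearMap.ext_ring ?_)
  change coboundary (coboundary g.toDoX) = 0
  rw [coboundary_toDoX, coboundary_deltaX]

lemma deltaX_mem_oddXPiece (g : OddXGraph) : g.deltaX ∈ oddXPiece g.ordX (g.degX + 1) := by
  by_cases hg : g.IsAdmissible
  · rw [deltaX_eq_sum hg]
    refine Submodule.sum_mem _ fun s hs => Submodule.smul_mem _ _ (Submodule.subset_span ?_)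
    obtain ⟨hdeg, hord⟩ := degX_act_and_ordX_act hg hs
    exact ⟨_, isValid_act hg hs, hord, hdeg, rfl⟩
  · rw [deltaX_eq_zero hg]
    exact Submodule.zero_mem _

lemma map_coboundary_oddXPiece_le (k m : ℤ) :
    (oddXPiece k m).map coboundary ≤ oddXPiece k (m + 1) := by
  rw [oddXPiece, Submodule.map_span_le]
  rintro x ⟨g, -, rfl, rfl, rfl⟩
  exact (coboundary_toDoX g).symm ▸ deltaX_mem_oddXPiece g

end OddXGraph

/-- The operator `δ̃` on the extended odd graph complex is well defined
on the quotient `D̃_o` (i.e. it descends through the sign relations, which is the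
existence of the linear operator `δ` below together with the first property), it
satisfies `δ̃ ∘ δ̃ = 0`, and it raises the extended degree by `1` while leaving the
extended order unchanged: `δ̃ : D̃_o^{k,m} → D̃_o^{k,m+1}`. -/
theorem extended_odd_graph_complex_coboundary :
    ∃ δ : DoX →ₗ[ℝ] DoX,
      (∀ g : OddXGraph,
        δ (Submodule.Quotient.mk (p := oddXRelations) (Finsupp.single g 1)) =
          Submodule.Quotient.mk (p := oddXRelations) (deltaXGen g)) ∧
      (∀ x : DoX, δ (δ x) = 0) ∧
      (∀ k m : ℤ, (oddXPiece k m).map δ ≤ oddXPiece k (m + 1)) := by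
  refine ⟨OddXGraph.coboundary, OddXGraph.coboundary_toDoX, fun x => ?_,
    OddXGraph.map_coboundary_oddXPiece_le⟩
  exact LinearMap.congr_fun OddXGraph.coboundary_comp_coboundary x
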